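/- arXiv:1807.01005 — 3 statements merged into one kernel-verified Lean document; each statement's English description precedes it below -/
import Mathlib

section
/- Let X be a simplicial complex embedded in ℝ^d and Γ a finite collection of at least d+2 subcomplexes of X. If H̃_{d-|Γ'|}(⋂Γ', F) = 0 for every subcollection Γ' ⊆ Γ with 1 ≤ |Γ'| ≤ d+1, then ⋂Γ ≠ ∅. -/
open Finset

/-- The faces of an abstract simplicial complex: a set of nonempty finite sets of
vertices, closed under taking nonempty subsets. -/
def IsComplex {V : Type*} (S : Set (Finset V)) : Prop :=
  (∀ s ∈ S, s.Nonempty) ∧ ∀ s ∈ S, ∀ t ⊆ s, t.Nonempty → t ∈ S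

/-- The nerve of a collection `Γ` of (sub)complexes, as a set of finsets of the index
type: the simplices are the nonempty subcollections with a common face. -/
def nerveC {ι V : Type*} (Γ : ι → Set (Finset V)) : Set (Finset ι) :=
  {σ | σ.Nonempty ∧ (⋂ i ∈ (σ : Finset ι), Γ i).Nonempty}

/-- Simplicial `n`-chains (dimension `n`, i.e. on vertex sets of cardinality `n+1`)
on the vertex type `V`, with coefficients in `A`. -/
abbrev Chains (A V : Type*) [AddCommGroup A] [LinearOrder V] (n : ℕ) : Type _ :=
  {s : Finset V // s.card = n + 1} →₀ A

variable (R : Type*) [CommRing R] (A : Type*) [AddCommGroup A] [Module R A]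
variable (V : Type*) [LinearOrder V]

/-- The simplicial boundary map, with the usual alternating signs determined by the
linear order on the vertices. -/
noncomputable def bdry (n : ℕ) : Chains A V (n + 1) →ₗ[R] Chains A V n :=
  Finsupp.lsum R fun s =>
    ∑ v ∈ (s : Finset V).attach,
      ((-1 : ℤ) ^ (((s : Finset V).filter (fun w => w < v.1)).card)) •
        (Finsupp.lsingle (R := R) ⟨(s : Finset V).erase v.1, by
          rw [Finset.card_erase_of_mem v.2, s.2]; rfl⟩)

/-- The augmentation map on `0`-chains. -/
noncomputable def aug : Chains A V 0 →ₗ[R] A :=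
  Finsupp.lsum R fun _ => LinearMap.id

/-- Reduced cycles: kernel of the boundary map, resp. of the augmentation in degree 0. -/
noncomputable def cycles : (n : ℕ) → Submodule R (Chains A V n)
  | 0 => LinearMap.ker (aug R A V)
  | (n + 1) => LinearMap.ker (bdry R A V n)

/-- Chains supported on the simplices belonging to `S`. -/
def chainsIn (S : Set (Finset V)) (n : ℕ) : Submodule R (Chains A V n) :=
  Finsupp.supported A R {s : {s : Finset V // s.card = n + 1} | ↑s ∈ S}

/-- Reduced cycles of the complex `S`. -/
noncomputable def cyclesIn (S : Set (Finset V)) (n : ℕ) : Submodule R (Chains A V n) :=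
  cycles R A V n ⊓ chainsIn R A V S n

/-- Boundaries of chains of the complex `S`. -/
noncomputable def boundariesIn (S : Set (Finset V)) (n : ℕ) : Submodule R (Chains A V n) :=
  Submodule.map (bdry R A V n) (chainsIn R A V S (n + 1))

/-- Reduced simplicial homology of the complex `S` in degree `n ≥ 0`,
with coefficients in the `R`-module `A`. -/
noncomputable abbrev redH (S : Set (Finset V)) (n : ℕ) : Type _ :=
  (cyclesIn R A V S n) ⧸
    (Submodule.comap (cyclesIn R A V S n).subtype (boundariesIn R A V S n))

/-- Vanishing of the reduced homology of `S` in degree `n : ℤ`, with the convention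
that `H̃₋₁(S) = 0` iff `S` is nonempty (and trivial vanishing below degree `-1`). -/
def RedHVanish (S : Set (Finset V)) (n : ℤ) : Prop :=
  if n < -1 then True
  else if n = -1 then S.Nonempty
  else Subsingleton (redH R A V S n.toNat)

open scoped Classical in
/-- The dimension (rank) of the reduced homology of `S` in degree `n : ℤ`; in degree `-1`
it is `0` iff `S` is nonempty, in accordance with the convention. -/
noncomputable def redHRank (S : Set (Finset V)) (n : ℤ) : Cardinal :=
  if n < -1 then 0
  else if n = -1 then (if S.Nonempty then (0 : Cardinal) else 1)
  else Module.rank R (redH R A V S n.toNat)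



section Helly
open Classical in
/-- sign of a vertex in a finset -/
noncomputable def hsgn {V : Type*} [LinearOrder V] (s : Finset V) (v : V) : ℤ :=
  (-1 : ℤ) ^ ((s.filter (fun w => w < v)).card)

/-- total augmented boundary -/
noncomputable def hD (F V : Type*) [Field F] [LinearOrder V] :
    (Finset V →₀ F) →ₗ[F] (Finset V →₀ F) :=
  Finsupp.lsum F fun s => ∑ v ∈ s, (hsgn s v) • (Finsupp.lsingle (R := F) (s.erase v))

theorem hD_single {F V : Type*} [Field F] [LinearOrder V] (s : Finset V) (a : F) :
    hD F V (Finsupp.single s a) = ∑ v ∈ s, hsgn s v • Finsupp.single (s.erase v) a := by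
  simp [hD]

theorem hsgn_singleton {V : Type*} [LinearOrder V] (v : V) : hsgn {v} v = 1 := by
  simp [hsgn, Finset.filter_singleton]

theorem hsgn_anti {V : Type*} [LinearOrder V] (s : Finset V) (v w : V) (hv : v ∈ s) (hw : w ∈ s)
    (hvw : v < w) : hsgn s v * hsgn (s.erase v) w = - (hsgn s w * hsgn (s.erase w) v) := by
  unfold hsgn
  have h1 : (s.erase w).filter (fun x => x < v) = s.filter (fun x => x < v) := by
    ext x; simp only [Finset.mem_filter, Finset.mem_erase]
    constructor
    · tauto
    · rintro ⟨a, b⟩; exact ⟨⟨(b.trans hvw).ne, a⟩, b⟩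
  have h2 : (s.erase v).filter (fun x => x < w) = (s.filter (fun x => x < w)).erase v := by
    ext x; simp only [Finset.mem_filter, Finset.mem_erase]; tauto
  have h3 : (s.filter (fun x => x < w)).card = ((s.filter (fun x => x < w)).erase v).card + 1 := by
    rw [Finset.card_erase_add_one]; simp [hv, hvw]
  simp only [h1, h2, h3, pow_succ]
  ring

theorem hD_hD {F V : Type*} [Field F] [LinearOrder V] (c : Finset V →₀ F) :
    hD F V (hD F V c) = 0 := by
  induction c using Finsupp.induction_linear with
  | zero => simp
  | add f g hf hg => simp [hf, hg]
  | single s a =>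
    rw [hD_single, map_sum]
    simp only [map_zsmul, hD_single, Finset.smul_sum, smul_smul]
    rw [Finset.sum_sigma']
    refine Finset.sum_involution (fun p _ => ⟨p.2, p.1⟩) ?_ ?_ ?_ ?_
    · rintro ⟨v, w⟩ h
      simp only [Finset.mem_sigma, Finset.mem_erase] at h
      obtain ⟨hv, hne, hw⟩ := h
      simp only
      rw [Finset.erase_right_comm (a := w) (b := v), ← add_smul]
      rcases lt_or_gt_of_ne hne with h | h
      · rw [hsgn_anti s w v hw hv h]; simp
      · rw [hsgn_anti s v w hv hw h]; simp
    · rintro ⟨v, w⟩ h _ he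
      simp only [Finset.mem_sigma, Finset.mem_erase] at h
      simp only [Sigma.mk.injEq] at he
      exact h.2.1 he.1
    · rintro ⟨v, w⟩ h
      simp only [Finset.mem_sigma, Finset.mem_erase] at h ⊢
      exact ⟨h.2.2, fun e => h.2.1 e.symm, h.1⟩
    · rintro ⟨v, w⟩ h
      rfl

/-- chains of `A` on finsets of cardinality `n` -/
noncomputable def hS (F : Type*) {V : Type*} [Field F] (A : Set (Finset V)) (n : ℕ) :
    Submodule F (Finset V →₀ F) :=
  Finsupp.supported F F {s | s ∈ A ∧ s.card = n}

theorem hS_mono (F : Type*) {V : Type*} [Field F] {A B : Set (Finset V)} (h : A ⊆ B) (n : ℕ) :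
    hS F A n ≤ hS F B n :=
  Finsupp.supported_mono fun _ hs => ⟨h hs.1, hs.2⟩

theorem hS_inter {F V : Type*} [Field F] {A B : Set (Finset V)} {n : ℕ} {c : Finset V →₀ F}
    (h1 : c ∈ hS F A n) (h2 : c ∈ hS F B n) : c ∈ hS F (A ∩ B) n := by
  intro s hs
  exact ⟨⟨(h1 hs).1, (h2 hs).1⟩, (h1 hs).2⟩

theorem hS_union {F V : Type*} [Field F] {A B : Set (Finset V)} {n : ℕ} {c : Finset V →₀ F}
    (h : c ∈ hS F (A ∪ B) n) : ∃ a ∈ hS F A n, ∃ b ∈ hS F B n, c = a + b := by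
  have : {s | s ∈ A ∪ B ∧ s.card = n} = {s | s ∈ A ∧ s.card = n} ∪ {s | s ∈ B ∧ s.card = n} := by
    ext s; simp only [Set.mem_union, Set.mem_ofPred_eq]; tauto
  unfold hS at h
  rw [this, Finsupp.supported_union, Submodule.mem_sup] at h
  obtain ⟨a, ha, b, hb, e⟩ := h
  exact ⟨a, ha, b, hb, e.symm⟩

theorem hD_mem {F V : Type*} [Field F] [LinearOrder V] {A : Set (Finset V)} (hA : IsLowerSet A)
    {n : ℕ} {c : Finset V →₀ F} (h : c ∈ hS F A (n + 1)) : hD F V c ∈ hS F A n := by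
  unfold hD
  rw [Finsupp.lsum_apply]
  refine Submodule.sum_mem _ fun s hs => ?_
  change (∑ v ∈ s, (hsgn s v) • (Finsupp.lsingle (R := F) (s.erase v))) (c s) ∈ hS F A n
  rw [LinearMap.sum_apply]
  refine Submodule.sum_mem _ fun v hv => ?_
  rw [LinearMap.smul_apply]
  refine zsmul_mem ?_ _
  have := h hs
  refine Finsupp.single_mem_supported _ _ ⟨hA (Finset.erase_subset v s) this.1, ?_⟩
  rw [Finset.card_erase_of_mem hv, this.2]; rfl

/-- vanishing of homology in (cardinality) degree `n` -/
def hV (F : Type*) {V : Type*} [Field F] [LinearOrder V] (A : Set (Finset V)) (n : ℕ) : Prop :=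
  ∀ c ∈ hS F A n, hD F V c = 0 → ∃ b ∈ hS F A (n + 1), hD F V b = c

theorem hV_inter {F V : Type*} [Field F] [LinearOrder V] {A B : Set (Finset V)}
    (hA : IsLowerSet A) (hB : IsLowerSet B) {n : ℕ}
    (h1 : hV F A n) (h2 : hV F B n) (h3 : hV F (A ∪ B) (n + 1)) : hV F (A ∩ B) n := by
  intro c hc hz
  obtain ⟨a, ha, rfl⟩ := h1 c (hS_mono F Set.inter_subset_left n hc) hz
  obtain ⟨b, hb, hab⟩ := h2 _ (hS_mono F Set.inter_subset_right n hc) hz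
  obtain ⟨e, he, hE⟩ := h3 (a - b) (sub_mem (hS_mono F Set.subset_union_left _ ha)
    (hS_mono F Set.subset_union_right _ hb)) (by rw [map_sub, hab, sub_self])
  obtain ⟨x, hx, y, hy, rfl⟩ := hS_union he
  refine ⟨a - hD F V x, hS_inter (sub_mem ha (hD_mem hA hx)) ?_, ?_⟩
  · have : a - hD F V x = b + hD F V y := by
      rw [map_add] at hE
      rw [sub_eq_iff_eq_add, add_assoc, add_comm (hD F V y), hE]; abel
    rw [this]
    exact add_mem hb (hD_mem hB hy)
  · rw [map_sub, hD_hD, sub_zero]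

theorem hV_union {F V : Type*} [Field F] [LinearOrder V] {A B : Set (Finset V)}
    (hA : IsLowerSet A) (hB : IsLowerSet B) {n : ℕ}
    (h1 : hV F A (n + 1)) (h2 : hV F B (n + 1)) (h3 : hV F (A ∩ B) n) :
    hV F (A ∪ B) (n + 1) := by
  intro c hc hz
  obtain ⟨x, hx, y, hy, rfl⟩ := hS_union hc
  rw [map_add] at hz
  have hxy : hD F V x = - hD F V y := eq_neg_of_add_eq_zero_left hz
  obtain ⟨e, he, hE⟩ := h3 (hD F V x) (hS_inter (hD_mem hA hx)
    (by rw [hxy]; exact neg_mem (hD_mem hB hy))) (hD_hD x)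
  obtain ⟨a, ha, ha'⟩ := h1 (x - e) (sub_mem hx (hS_mono F Set.inter_subset_left _ he))
    (by rw [map_sub, hE, sub_self])
  obtain ⟨b, hb, hb'⟩ := h2 (y + e) (add_mem hy (hS_mono F Set.inter_subset_right _ he))
    (by rw [map_add, hE, hxy]; simp)
  refine ⟨a + b, add_mem (hS_mono F Set.subset_union_left _ ha)
    (hS_mono F Set.subset_union_right _ hb), ?_⟩
  rw [map_add, ha', hb']; abel

theorem helly_induct {F V ι : Type*} [Field F] [LinearOrder V] (d : ℕ) (T : Set (Finset V))
    (hT : ∀ n, d + 1 ≤ n → ∀ c ∈ hS F T n, hD F V c = 0 → c = 0) (k : ℕ) :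
    ∀ (A : ι → Set (Finset V)) (I : Finset ι), I.card = k → I.Nonempty →
      (∀ i, IsLowerSet (A i)) → (∀ i, ∅ ∈ A i) → (∀ i, A i ⊆ T) →
      (∀ J ⊆ I, J.Nonempty → ∀ n, n + J.card = d + 1 → hV F (⋂ i ∈ J, A i) n) →
      ∀ n, d + 1 ≤ n + I.card → hV F (⋂ i ∈ I, A i) n := by
  classical
  induction k with
  | zero =>
    intro A I hk hI
    simp at hk; simp [hk] at hI
  | succ k ih =>
    intro A I hk hI hlow hemp hAT hyp n hn
    rcases hn.eq_or_lt with hn' | hn'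
    · exact hyp I subset_rfl hI n hn'.symm
    have lowJ : ∀ J : Finset ι, IsLowerSet (⋂ i ∈ J, A i) := fun J =>
      isLowerSet_iInter₂ fun i _ => hlow i
    obtain ⟨i, hi⟩ := hI
    by_cases hj : ∃ j ∈ I, j ≠ i
    swap
    · have hIi : I = {i} := by
        push Not at hj
        exact Finset.eq_singleton_iff_unique_mem.2 ⟨hi, hj⟩
      subst hIi
      intro c hc hz
      rw [Finset.card_singleton] at hn'
      refine ⟨0, zero_mem _, ?_⟩
      rw [map_zero, hT n (by omega) c (hS_mono F ?_ n hc) hz]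
      intro s hs
      simp at hs
      exact hAT i hs
    obtain ⟨j, hj, hji⟩ := hj
    have e1 : (⋂ l ∈ I, A l) = (⋂ l ∈ I.erase j, A l) ∩ (⋂ l ∈ I.erase i, A l) := by
      ext s
      simp only [Set.mem_iInter, Set.mem_inter_iff, Finset.mem_erase]
      constructor
      · intro h; exact ⟨fun l hl => h l hl.2, fun l hl => h l hl.2⟩
      · rintro ⟨h1, h2⟩ l hl
        by_cases hlj : l = j
        · subst hlj; exact h2 l ⟨hji, hl⟩
        · exact h1 l ⟨hlj, hl⟩
    have up : ∀ J : Finset ι, j ∉ J → i ∈ J →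
        (⋂ l ∈ J, Function.update A i (A i ∪ A j) l) =
          (⋂ l ∈ J, A l) ∪ (⋂ l ∈ insert j (J.erase i), A l) := by
      intro J hjJ hiJ
      ext s
      simp only [Set.mem_iInter, Set.mem_union, Finset.mem_insert, Finset.mem_erase]
      constructor
      · intro h
        have h0 := h i hiJ
        rw [Function.update_self] at h0
        have h1 : ∀ l ∈ J, l ≠ i → s ∈ A l := fun l hl hli => by
          have := h l hl
          rwa [Function.update_of_ne hli] at this
        rcases h0 with h0 | h0
        · left; intro l hl
          by_cases hli : l = i
          · rw [hli]; exact h0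
          · exact h1 l hl hli
        · right; rintro l (rfl | hl)
          · exact h0
          · exact h1 l hl.2 hl.1
      · rintro (h | h) l hl
        · by_cases hli : l = i
          · subst hli; rw [Function.update_self]; exact Or.inl (h l hl)
          · rw [Function.update_of_ne hli]; exact h l hl
        · by_cases hli : l = i
          · subst hli; rw [Function.update_self]; exact Or.inr (h j (Or.inl rfl))
          · rw [Function.update_of_ne hli]; exact h l (Or.inr ⟨hli, hl⟩)
    have hcj : (I.erase j).card = k := by rw [Finset.card_erase_of_mem hj, hk]; rfl
    have hci : (I.erase i).card = k := by rw [Finset.card_erase_of_mem hi, hk]; rfl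
    have hij' : i ∈ I.erase j := Finset.mem_erase.2 ⟨hji.symm, hi⟩
    have hji' : j ∈ I.erase i := Finset.mem_erase.2 ⟨hji, hj⟩
    rw [e1]
    refine hV_inter (lowJ _) (lowJ _) ?_ ?_ ?_
    · exact ih A _ hcj ⟨i, hij'⟩ hlow hemp hAT
        (fun J hJ => hyp J (hJ.trans (Finset.erase_subset _ _))) n (by omega)
    · exact ih A _ hci ⟨j, hji'⟩ hlow hemp hAT
        (fun J hJ => hyp J (hJ.trans (Finset.erase_subset _ _))) n (by omega)
    · have e2 : I.erase i = insert j ((I.erase j).erase i) := by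
        ext l; simp only [Finset.mem_insert, Finset.mem_erase]
        by_cases hl : l = j
        · subst hl; simp [hji, hj]
        · simp [hl]
      rw [e2, ← up (I.erase j) (by simp) hij']
      refine ih _ (I.erase j) hcj ⟨i, hij'⟩ ?_ ?_ ?_ ?_ (n + 1) (by omega)
      · intro l
        by_cases hli : l = i
        · subst hli; rw [Function.update_self]; exact (hlow _).union (hlow _)
        · rw [Function.update_of_ne hli]; exact hlow l
      · intro l
        by_cases hli : l = i
        · subst hli; rw [Function.update_self]; exact Or.inl (hemp _)
        · rw [Function.update_of_ne hli]; exact hemp l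
      · intro l
        by_cases hli : l = i
        · subst hli; rw [Function.update_self]; exact Set.union_subset (hAT _) (hAT _)
        · rw [Function.update_of_ne hli]; exact hAT l
      · intro J hJ hJne m hm
        have hjJ : j ∉ J := fun h => by simpa using hJ h
        have hJI : J ⊆ I := hJ.trans (Finset.erase_subset _ _)
        by_cases hiJ : i ∈ J
        · rw [up J hjJ hiJ]
          have hK : insert j (J.erase i) ⊆ I := by
            intro l hl
            rcases Finset.mem_insert.1 hl with rfl | hl
            · exact hj
            · exact hJI (Finset.erase_subset _ _ hl)
          have hKc : (insert j (J.erase i)).card = J.card := by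
            rw [Finset.card_insert_of_notMem (by simp [hjJ]), Finset.card_erase_add_one hiJ]
          cases m with
          | zero =>
            intro c hc hz
            obtain ⟨b, hb, hb'⟩ := hyp J hJI hJne 0 hm c (by
              intro s hs
              have := (hc hs).2
              refine ⟨?_, this⟩
              rw [Finset.card_eq_zero] at this
              rw [this]
              simpa using fun i _ => hemp i) hz
            exact ⟨b, hS_mono F Set.subset_union_left _ hb, hb'⟩
          | succ m =>
            refine hV_union (lowJ _) (lowJ _) (hyp J hJI hJne _ hm)
              (hyp _ hK ⟨j, by simp⟩ _ (by rw [hKc]; exact hm)) ?_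
            have e3 : (⋂ l ∈ J, A l) ∩ (⋂ l ∈ insert j (J.erase i), A l) =
                ⋂ l ∈ insert j J, A l := by
              ext s
              simp only [Set.mem_iInter, Set.mem_inter_iff, Finset.mem_insert, Finset.mem_erase]
              constructor
              · rintro ⟨h1, h2⟩ l (rfl | hl)
                · exact h2 _ (Or.inl rfl)
                · exact h1 l hl
              · intro h
                exact ⟨fun l hl => h l (Or.inr hl),
                  fun l hl => h l (hl.imp id fun h => h.2)⟩
            rw [e3]
            refine hyp _ (Finset.insert_subset hj hJI) ⟨j, by simp⟩ m ?_
            rw [Finset.card_insert_of_notMem hjJ]; omega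
        · have : (⋂ l ∈ J, Function.update A i (A i ∪ A j) l) = ⋂ l ∈ J, A l := by
            refine Set.iInter₂_congr fun l hl => ?_
            rw [Function.update_of_ne]
            rintro rfl; exact hiJ hl
          rw [this]
          exact hyp J hJI hJne m hm

/-- inclusion of graded chains into total chains -/
noncomputable def hEmb (F V : Type*) [Field F] [LinearOrder V] (n : ℕ) :
    Chains F V n →ₗ[F] (Finset V →₀ F) :=
  Finsupp.lmapDomain F F Subtype.val

theorem hEmb_inj (F V : Type*) [Field F] [LinearOrder V] (n : ℕ) :
    Function.Injective (hEmb F V n) :=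
  Finsupp.mapDomain_injective Subtype.val_injective

theorem hEmb_bdry {F V : Type*} [Field F] [LinearOrder V] (n : ℕ) (c : Chains F V (n + 1)) :
    hEmb F V n (bdry F F V n c) = hD F V (hEmb F V (n + 1) c) := by
  induction c using Finsupp.induction_linear with
  | zero => simp
  | add f g hf hg => simp [hf, hg]
  | single s a =>
    have : hEmb F V (n + 1) (Finsupp.single s a) = Finsupp.single (s : Finset V) a := by
      simp [hEmb]
    rw [this, hD_single, bdry, Finsupp.lsum_single, LinearMap.sum_apply, map_sum,
      ← Finset.sum_attach (s : Finset V)]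
    refine Finset.sum_congr rfl fun v _ => ?_
    rw [LinearMap.smul_apply, map_zsmul]
    simp only [hEmb, Finsupp.lsingle_apply, Finsupp.lmapDomain_apply, Finsupp.mapDomain_single]
    unfold hsgn
    congr!

theorem hEmb_aug {F V : Type*} [Field F] [LinearOrder V] (c : Chains F V 0) :
    Finsupp.single ∅ (aug F F V c) = hD F V (hEmb F V 0 c) := by
  induction c using Finsupp.induction_linear with
  | zero => simp
  | add f g hf hg => simp only [map_add, Finsupp.single_add, hf, hg]
  | single s a =>
    have : hEmb F V 0 (Finsupp.single s a) = Finsupp.single (s : Finset V) a := by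
      simp [hEmb]
    obtain ⟨s, hs⟩ := s
    obtain ⟨v, rfl⟩ := Finset.card_eq_one.1 (by simpa using hs)
    rw [this, hD_single, Finset.sum_singleton, hsgn_singleton, one_smul]
    simp [aug]

theorem hEmb_mem {F V : Type*} [Field F] [LinearOrder V] {S : Set (Finset V)} {n : ℕ}
    {c : Chains F V n} (h : c ∈ chainsIn F F V S n) :
    hEmb F V n c ∈ hS F (insert ∅ S) (n + 1) := by
  classical
  intro s hs
  have := Finsupp.mapDomain_support hs
  obtain ⟨t, ht, rfl⟩ := Finset.mem_image.1 this
  exact ⟨Or.inr (h ht), t.2⟩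

theorem hEmb_surj {F V : Type*} [Field F] [LinearOrder V] {S : Set (Finset V)} {n : ℕ}
    {c : Finset V →₀ F} (h : c ∈ hS F (insert ∅ S) (n + 1)) :
    ∃ c' ∈ chainsIn F F V S n, hEmb F V n c' = c := by
  classical
  have hr : (c.support : Set (Finset V)) ⊆
      Set.range (Subtype.val : {s : Finset V // s.card = n + 1} → Finset V) := by
    intro s hs
    exact ⟨⟨s, (h hs).2⟩, rfl⟩
  refine ⟨c.comapDomain Subtype.val Subtype.val_injective.injOn, ?_, ?_⟩
  · intro s hs
    have hs' : (s : Finset V) ∈ c.support := by simpa using hs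
    rcases (h hs').1 with h0 | h0
    · have := s.2; rw [h0] at this; simp at this
    · exact h0
  · exact Finsupp.mapDomain_comapDomain _ Subtype.val_injective c hr

theorem hV_of_red {F V : Type*} [Field F] [LinearOrder V] {S : Set (Finset V)}
    (hS0 : IsComplex S) (n : ℕ) (h : RedHVanish F F V S ((n : ℤ) - 1)) :
    hV F (insert ∅ S) n := by
  cases n with
  | zero =>
    simp [RedHVanish] at h
    obtain ⟨s, hs⟩ := h
    obtain ⟨v, hv⟩ := hS0.1 s hs
    have hvS := hS0.2 s hs {v} (by simpa using hv) (by simp)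
    intro c hc _
    refine ⟨Finsupp.single {v} (c ∅), Finsupp.single_mem_supported _ _ ⟨Or.inr hvS, by simp⟩, ?_⟩
    have hc' : c = Finsupp.single ∅ (c ∅) := by
      ext s
      by_cases hs : s = ∅
      · subst hs; simp
      · rw [Finsupp.single_eq_of_ne hs]
        by_contra h0
        exact hs (Finset.card_eq_zero.1 (hc (Finsupp.mem_support_iff.2 h0)).2)
    rw [hD_single, Finset.sum_singleton, hsgn_singleton, one_smul]
    conv_rhs => rw [hc']
    simp
  | succ n =>
    have hn : ((n + 1 : ℕ) : ℤ) - 1 = n := by push_cast; ring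
    rw [hn] at h
    unfold RedHVanish at h
    rw [if_neg (by omega), if_neg (by omega), Int.toNat_natCast] at h
    intro c hc hz
    obtain ⟨c', hc', rfl⟩ := hEmb_surj hc
    have hcyc : c' ∈ cycles F F V n := by
      cases n with
      | zero =>
        change c' ∈ LinearMap.ker _
        rw [LinearMap.mem_ker]
        rw [← hEmb_aug] at hz
        simpa using hz
      | succ n =>
        change c' ∈ LinearMap.ker _
        rw [LinearMap.mem_ker]
        rw [← hEmb_bdry] at hz
        exact hEmb_inj F V n (by rw [hz, map_zero])
    rw [Submodule.Quotient.subsingleton_iff] at h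
    have : (⟨c', hcyc, hc'⟩ : cyclesIn F F V S n) ∈
      Submodule.comap (cyclesIn F F V S n).subtype (boundariesIn F F V S n) := by
      rw [h]; trivial
    obtain ⟨b, hb, hb'⟩ := this
    refine ⟨hEmb F V (n + 1) b, hEmb_mem hb, ?_⟩
    rw [← hEmb_bdry, hb']; rfl

theorem hcoords {E : Type*} [NormedAddCommGroup E] [NormedSpace ℝ E] [FiniteDimensional ℝ E]
    [DecidableEq E] (s : Finset E) (hs : AffineIndependent ℝ ((↑) : s → E))
    (hc : s.card = Module.finrank ℝ E + 1) :
    ∃ φ : E → (E →ᵃ[ℝ] ℝ), (∀ v ∈ s, φ v v = 1) ∧ (∀ v ∈ s, ∀ w ∈ s, v ≠ w → φ v w = 0) ∧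
      (∀ x, x ∈ convexHull ℝ (s : Set E) ↔ ∀ v ∈ s, 0 ≤ φ v x) ∧
      (∀ x, x ∈ interior (convexHull ℝ (s : Set E)) ↔ ∀ v ∈ s, 0 < φ v x) ∧
      (∀ f g : E →ᵃ[ℝ] ℝ, (∀ v ∈ s, f v = g v) → f = g) ∧
      (∀ x, ∑ v ∈ s, φ v x = 1) ∧ (∀ x, ∑ v ∈ s, φ v x • v = x) := by
  have htot : affineSpan ℝ (Set.range ((↑) : s → E)) = ⊤ :=
    hs.affineSpan_eq_top_iff_card_eq_finrank_add_one.2 (by simpa using hc)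
  let b : AffineBasis s ℝ E := ⟨_, hs, htot⟩
  have hb : ∀ v : s, b v = v := fun v => rfl
  have hr : Set.range b = (s : Set E) := by
    change Set.range ((↑) : s → E) = _
    simp
  let φ : E → (E →ᵃ[ℝ] ℝ) := fun v => if h : v ∈ s then b.coord ⟨v, h⟩ else 0
  have hφ : ∀ v (h : v ∈ s), φ v = b.coord ⟨v, h⟩ := fun v h => dif_pos h
  refine ⟨φ, ?_, ?_, ?_, ?_, ?_, ?_, ?_⟩
  · intro v hv
    rw [hφ v hv]; exact b.coord_apply_eq ⟨v, hv⟩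
  · intro v hv w hw h
    rw [hφ v hv]; exact b.coord_apply_ne (i := ⟨v, hv⟩) (j := ⟨w, hw⟩) (by simpa using h)
  · intro x
    rw [← hr, b.convexHull_eq_nonneg_coord]
    constructor
    · intro h v hv; rw [hφ v hv]; exact h _
    · intro h v; have := h v v.2; rwa [hφ v v.2] at this
  · intro x
    rw [← hr, b.interior_convexHull]
    constructor
    · intro h v hv; rw [hφ v hv]; exact h _
    · intro h v; have := h v v.2; rwa [hφ v v.2] at this
  · intro f g h
    apply AffineMap.ext_on (s := (s : Set E)) (by rw [← hr]; exact htot)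
    intro v hv; exact h v hv
  · intro x
    rw [← b.sum_coord_apply_eq_one x, ← Finset.sum_coe_sort s]
    exact Finset.sum_congr rfl fun v _ => by rw [hφ v v.2]
  · intro x
    conv_rhs => rw [← b.linear_combination_coord_eq_self x]
    rw [← Finset.sum_coe_sort s]
    exact Finset.sum_congr rfl fun v _ => by rw [hφ v v.2, hb]

theorem hface {E : Type*} [NormedAddCommGroup E] [NormedSpace ℝ E] (s r : Finset E) (hrs : r ⊆ s)
    (φ : E → (E →ᵃ[ℝ] ℝ)) (x : E) (h1 : ∑ v ∈ s, φ v x = 1) (h2 : ∑ v ∈ s, φ v x • v = x)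
    (h0 : ∀ v ∈ s, 0 ≤ φ v x) (hz : ∀ v ∈ s, v ∉ r → φ v x = 0) :
    x ∈ convexHull ℝ (r : Set E) := by
  rw [← Finset.sum_subset hrs hz] at h1
  rw [← Finset.sum_subset hrs (fun v hv hr => by rw [hz v hv hr, zero_smul])] at h2
  rw [← h2]
  exact (convex_convexHull ℝ _).sum_mem (fun v hv => h0 v (hrs hv)) h1
    (fun v hv => subset_convexHull ℝ _ hv)

/-- Two top-dimensional simplices sharing a facet cover a neighbourhood of each relative interior
point of the facet. -/
theorem htwo {E : Type*} [NormedAddCommGroup E] [NormedSpace ℝ E] [FiniteDimensional ℝ E]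
    [DecidableEq E] (X : Geometry.SimplicialComplex ℝ E) (s s' : Finset E) (hs : s ∈ X.faces)
    (hs' : s' ∈ X.faces) (hc : s.card = Module.finrank ℝ E + 1)
    (hc' : s'.card = Module.finrank ℝ E + 1) (hne : s' ≠ s) (v : E) (hv : v ∈ s)
    (ht : s.erase v ⊆ s') (φ : E → (E →ᵃ[ℝ] ℝ))
    (h1 : ∀ v ∈ s, φ v v = 1) (h2 : ∀ v ∈ s, ∀ w ∈ s, v ≠ w → φ v w = 0)
    (h3 : ∀ x, x ∈ convexHull ℝ (s : Set E) ↔ ∀ v ∈ s, 0 ≤ φ v x)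
    (h5 : ∀ f g : E →ᵃ[ℝ] ℝ, (∀ v ∈ s, f v = g v) → f = g)
    (h6 : ∀ x, ∑ v ∈ s, φ v x = 1) (h7 : ∀ x, ∑ v ∈ s, φ v x • v = x)
    (x : E) (hx0 : φ v x = 0) (hx : ∀ w ∈ s, w ≠ v → 0 < φ w x) :
    ∀ᶠ y in nhds x, y ∈ convexHull ℝ (s : Set E) ∪ convexHull ℝ (s' : Set E) := by
  obtain ⟨ψ, k1, k2, k3, k4, k5, k6, k7⟩ := hcoords s' (X.indep hs') hc'
  have hvs' : v ∉ s' := by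
    intro h
    apply hne
    symm
    apply Finset.eq_of_subset_of_card_le
    · intro w hw
      by_cases hwv : w = v
      · rw [hwv]; exact h
      · exact ht (Finset.mem_erase.2 ⟨hwv, hw⟩)
    · rw [hc, hc']
  obtain ⟨u, hu, hus⟩ : ∃ u ∈ s', u ∉ s.erase v := by
    by_contra! h
    have := Finset.card_le_card (show s' ⊆ s.erase v from h)
    rw [Finset.card_erase_of_mem hv, hc, hc'] at this
    omega
  have hs'u : s'.erase u = s.erase v := by
    symm
    apply Finset.eq_of_subset_of_card_le
    · intro w hw
      refine Finset.mem_erase.2 ⟨?_, ht hw⟩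
      rintro rfl; exact hus hw
    · rw [Finset.card_erase_of_mem hv, Finset.card_erase_of_mem hu, hc, hc']
  have hmem : ∀ w, w ∈ s' → w ≠ u → w ∈ s ∧ w ≠ v := by
    intro w hw hwu
    have : w ∈ s.erase v := by rw [← hs'u]; exact Finset.mem_erase.2 ⟨hwu, hw⟩
    exact ⟨(Finset.mem_erase.1 this).2, (Finset.mem_erase.1 this).1⟩
  have hmem' : ∀ w, w ∈ s → w ≠ v → w ∈ s' ∧ w ≠ u := by
    intro w hw hwu
    have : w ∈ s'.erase u := by rw [hs'u]; exact Finset.mem_erase.2 ⟨hwu, hw⟩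
    exact ⟨(Finset.mem_erase.1 this).2, (Finset.mem_erase.1 this).1⟩
  have hα : ψ u = (ψ u v) • φ v := by
    apply h5
    intro w hw
    by_cases hwv : w = v
    · subst hwv; simp [h1 w hw]
    · simp [h2 v hv w hw (Ne.symm hwv), k2 u hu w (hmem' w hw hwv).1 (hmem' w hw hwv).2.symm]
  have hα' : ∀ y, ψ u y = ψ u v * φ v y := by
    intro y
    conv_lhs => rw [hα]
    simp
  have hψ : ∀ w ∈ s', w ≠ u → ψ w x = φ w x := by
    intro w hw hwu
    have e : (φ w : E →ᵃ[ℝ] ℝ) = ψ w - (ψ w v) • φ v := by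
      apply h5
      intro z hz
      obtain ⟨hws, hwv⟩ := hmem w hw hwu
      by_cases hzv : z = v
      · subst hzv; simp [h1 z hz, h2 w hws z hz hwv]
      · obtain ⟨hzs', hzu⟩ := hmem' z hz hzv
        by_cases hwz : w = z
        · subst hwz; simp [h1 w hws, k1 w hw, h2 v hv w hws (Ne.symm hwv)]
        · simp [h2 w hws z hz hwz, k2 w hw z hzs' hwz, h2 v hv z hz (Ne.symm hzv)]
    rw [e]; simp [hx0]
  have cont : ∀ f : E →ᵃ[ℝ] ℝ, Continuous f := fun f => f.continuous_of_finiteDimensional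
  have ev1 : ∀ᶠ y in nhds x, ∀ w ∈ s, w ≠ v → 0 < φ w y := by
    rw [Filter.eventually_all_finset]
    intro w hw
    by_cases hwv : w = v
    · exact Filter.Eventually.of_forall fun y h => absurd hwv h
    · filter_upwards [continuousAt_const.eventually_lt
        (cont (φ w)).continuousAt (hx w hw hwv)] with y hy _ using hy
  have ev2 : ∀ᶠ y in nhds x, ∀ w ∈ s', w ≠ u → 0 < ψ w y := by
    rw [Filter.eventually_all_finset]
    intro w hw
    by_cases hwv : w = u
    · exact Filter.Eventually.of_forall fun y h => absurd hwv h
    · filter_upwards [continuousAt_const.eventually_lt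
        (cont (ψ w)).continuousAt (by
          rw [hψ w hw hwv]; exact hx w (hmem w hw hwv).1 (hmem w hw hwv).2 :
          (0:ℝ) < ψ w x)] with y hy _ using hy
  rcases le_or_gt (ψ u v) 0 with hneg | hpos
  · filter_upwards [ev1, ev2] with y hy1 hy2
    rcases le_total 0 (φ v y) with h | h
    · left
      rw [h3]
      intro w hw
      by_cases hwv : w = v
      · rw [hwv]; exact h
      · exact (hy1 w hw hwv).le
    · right
      rw [k3]
      intro w hw
      by_cases hwv : w = u
      · rw [hwv, hα']; exact mul_nonneg_of_nonpos_of_nonpos hneg h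
      · exact (hy2 w hw hwv).le
  · exfalso
    have lim : Filter.Tendsto (fun ε : ℝ => AffineMap.lineMap x v ε) (nhdsWithin 0 (Set.Ioi 0))
        (nhds x) := by
      have : ContinuousAt (fun ε : ℝ => (AffineMap.lineMap x v : ℝ →ᵃ[ℝ] E) ε) 0 :=
        AffineMap.lineMap_continuous.continuousAt
      have h := this.tendsto
      simp only [AffineMap.lineMap_apply_zero] at h
      exact h.mono_left nhdsWithin_le_nhds
    obtain ⟨ε, ⟨hy1, hy2⟩, hε⟩ := ((lim.eventually (ev1.and ev2)).and
      self_mem_nhdsWithin).exists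
    replace hε : 0 < ε := hε
    set y : E := AffineMap.lineMap x v ε with hy
    have hφy : φ v y = ε := by
      rw [hy, AffineMap.apply_lineMap, hx0, h1 v hv]; simp [AffineMap.lineMap_apply]
    have m1 : y ∈ convexHull ℝ (s : Set E) := by
      rw [h3]
      intro w hw
      by_cases hwv : w = v
      · rw [hwv, hφy]; exact hε.le
      · exact (hy1 w hw hwv).le
    have m2 : y ∈ convexHull ℝ (s' : Set E) := by
      rw [k3]
      intro w hw
      by_cases hwv : w = u
      · rw [hwv, hα', hφy]; positivity
      · exact (hy2 w hw hwv).le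
    have m3 := X.inter_subset_convexHull hs hs' ⟨m1, m2⟩
    have m4 : convexHull ℝ (s ∩ s' : Set E) ⊆ {z | φ v z ≤ 0} := by
      apply convexHull_min
      · rintro z ⟨hz, hz'⟩
        have : v ≠ z := by rintro rfl; exact hvs' hz'
        exact (h2 v hv z hz this).le
      · exact (convex_Iic (0:ℝ)).affine_preimage (φ v)
    have := m4 m3
    simp only [Set.mem_ofPred_eq] at this
    linarith

theorem hgeo {E : Type*} [NormedAddCommGroup E] [NormedSpace ℝ E] [FiniteDimensional ℝ E]
    [DecidableEq E] (X : Geometry.SimplicialComplex ℝ E) (T : Finset (Finset E))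
    (hTne : T.Nonempty) (hT : ∀ s ∈ T, s ∈ X.faces ∧ s.card = Module.finrank ℝ E + 1) :
    ∃ s ∈ T, ∃ v ∈ s, ∀ s' ∈ T, s.erase v ⊆ s' → s' = s := by
  obtain ⟨s₀, hs₀⟩ := hTne
  by_cases hd : Module.finrank ℝ E = 0
  · have : Subsingleton E := Module.finrank_zero_iff.1 hd
    obtain ⟨v, hv⟩ := X.nonempty_of_mem_faces (hT s₀ hs₀).1
    refine ⟨s₀, hs₀, v, hv, fun s' hs' _ => ?_⟩
    obtain ⟨w, hw⟩ := X.nonempty_of_mem_faces (hT s' hs').1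
    ext z
    rw [Subsingleton.elim z v]
    simp only [hv, iff_true]
    rwa [Subsingleton.elim v w]
  have hnt : Nontrivial E := Module.nontrivial_of_finrank_pos (R := ℝ) (Nat.pos_of_ne_zero hd)
  let U : Set E := ⋃ s ∈ T, convexHull ℝ (s : Set E)
  have hUc : IsCompact U :=
    T.isCompact_biUnion fun s _ => s.finite_toSet.isCompact_convexHull (𝕜 := ℝ)
  obtain ⟨q, hq⟩ : ∃ q, q ∉ U := by
    by_contra! h
    have : U = Set.univ := Set.eq_univ_of_forall h
    rw [this] at hUc
    exact NormedSpace.noncompactSpace ℝ E |>.noncompact_univ hUc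
  let B : Finset (Finset E) := (T.biUnion Finset.powerset).filter fun r =>
    r.card + 1 ≤ Module.finrank ℝ E
  have hBad : ∀ r ∈ B, affineSpan ℝ (insert q (r : Set E)) ≠ ⊤ := by
    intro r hr htop
    have hr' := (Finset.mem_filter.1 hr).2
    have h1 : vectorSpan ℝ ((insert q r : Finset E) : Set E) = ⊤ := by
      rw [← direction_affineSpan, Finset.coe_insert, htop, AffineSubspace.direction_top]
    have hcard := Finset.card_insert_le q r
    have hpos : 0 < (insert q r).card := Finset.card_pos.2 ⟨q, by simp⟩
    have h2 := finrank_vectorSpan_image_finset_le ℝ (id : E → E) (insert q r)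
      (n := (insert q r).card - 1) (by omega)
    rw [Finset.image_id, h1, finrank_top] at h2
    omega
  obtain ⟨p, hp, hpB⟩ : ∃ p ∈ interior (convexHull ℝ (s₀ : Set E)),
      ∀ r ∈ B, p ∉ affineSpan ℝ (insert q (r : Set E)) := by
    let : MeasurableSpace E := borel E
    have : BorelSpace E := ⟨rfl⟩
    let μ : MeasureTheory.Measure E := MeasureTheory.Measure.addHaar
    have hz : μ (⋃ r ∈ B, (affineSpan ℝ (insert q (r : Set E)) : Set E)) = 0 := by
      refine (MeasureTheory.measure_biUnion_null_iff B.countable_toSet).2 ?_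
      intro r hr
      exact MeasureTheory.Measure.addHaar_affineSubspace μ _ (hBad r hr)
    have hne : (interior (convexHull ℝ (s₀ : Set E))).Nonempty := by
      rw [interior_convexHull_nonempty_iff_affineSpan_eq_top]
      have := ((X.indep (hT s₀ hs₀).1).affineSpan_eq_top_iff_card_eq_finrank_add_one).2
        (by simpa using (hT s₀ hs₀).2)
      simpa using this
    have hpos := isOpen_interior.measure_pos μ hne
    by_contra! h
    have : interior (convexHull ℝ (s₀ : Set E)) ⊆
        ⋃ r ∈ B, (affineSpan ℝ (insert q (r : Set E)) : Set E) := by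
      intro p hp
      obtain ⟨r, hr, h⟩ := h p hp
      exact Set.mem_biUnion hr h
    exact hpos.ne' (MeasureTheory.measure_mono_null this hz)
  let L : ℝ → E := fun t => AffineMap.lineMap p q t
  have hLc : Continuous L := AffineMap.lineMap_continuous
  let K : Set ℝ := Set.Icc 0 1 ∩ L ⁻¹' U
  have hK : IsCompact K := isCompact_Icc.inter_right (hUc.isClosed.preimage hLc)
  have hK0 : (0 : ℝ) ∈ K := by
    refine ⟨by simp, ?_⟩
    change L 0 ∈ U
    simp only [L, AffineMap.lineMap_apply_zero]
    exact Set.mem_biUnion hs₀ (interior_subset hp)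
  obtain ⟨t, htK, htmax⟩ := hK.exists_isGreatest ⟨0, hK0⟩
  have ht1 : t < 1 := by
    refine lt_of_le_of_ne htK.1.2 ?_
    rintro rfl
    apply hq
    have := htK.2
    change L 1 ∈ U at this
    simpa [L] using this
  have hnot : ¬ ∀ᶠ y in nhds (L t), y ∈ U := by
    intro h
    have h1 : ∀ᶠ t' in nhdsWithin t (Set.Ioi t), L t' ∈ U :=
      (hLc.tendsto t).mono_left nhdsWithin_le_nhds |>.eventually h
    have h2 : ∀ᶠ t' in nhdsWithin t (Set.Ioi t), t' < 1 :=
      nhdsWithin_le_nhds (eventually_lt_nhds ht1)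
    obtain ⟨t', ⟨ha, hb⟩, hc⟩ := ((h1.and h2).and self_mem_nhdsWithin).exists
    replace hc : t < t' := hc
    have := htmax (show t' ∈ K from ⟨⟨htK.1.1.trans hc.le, hb.le⟩, ha⟩)
    linarith
  obtain ⟨s, hs, hxs⟩ : ∃ s ∈ T, L t ∈ convexHull ℝ (s : Set E) := by
    have : L t ∈ U := htK.2
    simpa [U] using this
  obtain ⟨φ, h1, h2, h3, h4, h5, h6, h7⟩ := hcoords s (X.indep (hT s hs).1) (hT s hs).2
  have hnn := (h3 _).1 hxs
  obtain ⟨v, hv, hv0⟩ : ∃ v ∈ s, φ v (L t) = 0 := by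
    by_contra! h
    apply hnot
    have : L t ∈ interior (convexHull ℝ (s : Set E)) :=
      (h4 _).2 fun v hv => lt_of_le_of_ne (hnn v hv) (h v hv).symm
    filter_upwards [mem_interior_iff_mem_nhds.1 this] with y hy
    exact Set.mem_biUnion hs hy
  have hvpos : ∀ w ∈ s, w ≠ v → 0 < φ w (L t) := by
    intro w hw hwv
    refine lt_of_le_of_ne (hnn w hw) fun hw0 => ?_
    let r := (s.erase v).erase w
    have hrs : r ⊆ s := (Finset.erase_subset _ _).trans (Finset.erase_subset _ _)
    have hxr : L t ∈ convexHull ℝ (r : Set E) := by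
      refine hface s r hrs φ _ (h6 _) (h7 _) hnn fun z hz hzr => ?_
      by_cases hzv : z = v
      · rw [hzv]; exact hv0
      by_cases hzw : z = w
      · rw [hzw]; exact hw0.symm
      exact absurd (Finset.mem_erase.2 ⟨hzw, Finset.mem_erase.2 ⟨hzv, hz⟩⟩) hzr
    have hrB : r ∈ B := by
      refine Finset.mem_filter.2 ⟨Finset.mem_biUnion.2 ⟨s, hs, Finset.mem_powerset.2 hrs⟩, ?_⟩
      rw [Finset.card_erase_of_mem (Finset.mem_erase.2 ⟨hwv, hw⟩), Finset.card_erase_of_mem hv,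
        (hT s hs).2]
      omega
    apply hpB r hrB
    have hx' : L t ∈ affineSpan ℝ (insert q (r : Set E)) :=
      affineSpan_mono ℝ (Set.subset_insert _ _) (convexHull_subset_affineSpan _ hxr)
    have hq' : q ∈ affineSpan ℝ (insert q (r : Set E)) :=
      mem_affineSpan ℝ (Set.mem_insert _ _)
    have hpe : p = AffineMap.lineMap q (L t) ((1 - t)⁻¹) := by
      have : (1 - t) ≠ 0 := by linarith
      simp only [L, AffineMap.lineMap_apply_module']
      have e : p + -q = (1 - t)⁻¹ • ((1 - t) • (p - q)) := by
        rw [smul_smul, inv_mul_cancel₀ this, one_smul, sub_eq_add_neg]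
      have e2 : t • (q - p) + p - q = (1 - t) • (p - q) := by module
      rw [e2, ← e]; abel
    rw [hpe]
    exact AffineMap.lineMap_mem _ hq' hx'
  refine ⟨s, hs, v, hv, fun s' hs' hsub => ?_⟩
  by_contra hne
  apply hnot
  filter_upwards [htwo X s s' (hT s hs).1 (hT s' hs').1 (hT s hs).2 (hT s' hs').2 hne v hv hsub
    φ h1 h2 h3 h5 h6 h7 (L t) hv0 hvpos] with y hy
  rcases hy with hy | hy
  · exact Set.mem_biUnion hs hy
  · exact Set.mem_biUnion hs' hy

theorem htop {F E : Type*} [Field F] [NormedAddCommGroup E] [NormedSpace ℝ E]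
    [FiniteDimensional ℝ E] [LinearOrder E] (X : Geometry.SimplicialComplex ℝ E) (n : ℕ)
    (hn : Module.finrank ℝ E + 1 ≤ n) (c : Finset E →₀ F)
    (hc : c ∈ hS F (insert ∅ X.faces) n) (hz : hD F E c = 0) : c = 0 := by
  have hX : ∀ s ∈ c.support, s ∈ X.faces ∧ s.card = n := by
    intro s hs
    obtain ⟨h1, h2⟩ := hc hs
    refine ⟨h1.resolve_left ?_, h2⟩
    rintro rfl
    simp at h2; omega
  by_contra hne
  have hTne : c.support.Nonempty := Finsupp.support_nonempty_iff.2 hne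
  have hn' : n = Module.finrank ℝ E + 1 := by
    obtain ⟨s, hs⟩ := hTne
    have := (X.indep (hX s hs).1).card_le_finrank_succ
    rw [Fintype.card_coe, (hX s hs).2] at this
    have h2 := Submodule.finrank_le (vectorSpan ℝ (Set.range ((↑) : s → E)))
    omega
  subst hn'
  obtain ⟨s, hs, v, hv, huniq⟩ := hgeo X c.support hTne hX
  have hval : hD F E c (s.erase v) = hsgn s v • c s := by
    unfold hD
    rw [Finsupp.lsum_apply, Finsupp.sum, Finsupp.finsetSum_apply, Finset.sum_eq_single s]
    · rw [LinearMap.sum_apply, Finsupp.finsetSum_apply, Finset.sum_eq_single v]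
      · simp
      · intro w hw hwv
        rw [LinearMap.smul_apply, Finsupp.smul_apply, Finsupp.lsingle_apply,
          Finsupp.single_eq_of_ne, smul_zero]
        intro h
        have : w ∈ s.erase v := Finset.mem_erase.2 ⟨hwv, hw⟩
        rw [h] at this
        simp at this
      · intro h; exact absurd hv h
    · intro s' hs' hne'
      rw [LinearMap.sum_apply, Finsupp.finsetSum_apply]
      refine Finset.sum_eq_zero fun w hw => ?_
      rw [LinearMap.smul_apply, Finsupp.smul_apply, Finsupp.lsingle_apply,
        Finsupp.single_eq_of_ne, smul_zero]
      intro h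
      exact hne' (huniq s' hs' (by rw [h]; exact Finset.erase_subset _ _))
    · intro h; exact absurd hs h
  rw [hz, Finsupp.zero_apply] at hval
  have hcs := Finsupp.mem_support_iff.1 hs
  unfold hsgn at hval
  rcases neg_one_pow_eq_or ℤ ((s.filter (fun w => w < v)).card) with h | h
  · rw [h, one_smul] at hval; exact hcs hval.symm
  · rw [h, neg_smul, one_smul] at hval; exact hcs (neg_eq_zero.1 hval.symm)

end Helly

/-- Topological Helly theorem: for a simplicial complex embedded in `ℝ^d` and at least
`d+2` subcomplexes, vanishing of `H̃_{d-|Γ'|}(⋂Γ')` for all subcollections of size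
`≤ d+1` forces a common face. -/
theorem topological_helly (d : ℕ) [LinearOrder (EuclideanSpace ℝ (Fin d))]
    (F : Type*) [Field F] {ι : Type*} [Fintype ι]
    (hcard : d + 2 ≤ Fintype.card ι)
    (X : Geometry.SimplicialComplex ℝ (EuclideanSpace ℝ (Fin d)))
    (Γ : ι → Set (Finset (EuclideanSpace ℝ (Fin d))))
    (hΓ : ∀ i, IsComplex (Γ i) ∧ Γ i ⊆ X.faces)
    (h : ∀ Γ' : Finset ι, 1 ≤ Γ'.card → Γ'.card ≤ d + 1 →
      RedHVanish F F (EuclideanSpace ℝ (Fin d)) (⋂ i ∈ Γ', Γ i)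
        ((d : ℤ) - Γ'.card)) :
    (⋂ i, Γ i).Nonempty := by
  have hι : (Finset.univ : Finset ι).Nonempty := by
    rw [← Finset.card_pos, Finset.card_univ]; omega
  have inter_eq : ∀ J : Finset ι, (⋂ i ∈ J, insert ∅ (Γ i)) = insert ∅ (⋂ i ∈ J, Γ i) := by
    intro J
    ext s
    simp only [Set.mem_iInter, Set.mem_insert_iff]
    by_cases hs : s = ∅ <;> simp [hs]
  have key := helly_induct (F := F) d (insert ∅ X.faces)
    (fun n hn c hc hz => htop X n (by simpa using hn) c hc hz) _
    (fun i => insert ∅ (Γ i)) Finset.univ rfl hι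
    (by
      intro i s t hts hs
      rcases hs with rfl | hs
      · left; exact Finset.subset_empty.1 hts
      · rcases t.eq_empty_or_nonempty with rfl | ht
        · left; rfl
        · right; exact (hΓ i).1.2 s hs t hts ht)
    (fun i => Or.inl rfl)
    (fun i => Set.insert_subset_insert (hΓ i).2)
    (by
      intro J _ hJ n hn
      rw [inter_eq]
      have hJ1 := hJ.card_pos
      apply hV_of_red
      · obtain ⟨i, hi⟩ := hJ
        constructor
        · intro s hs
          exact (hΓ i).1.1 s (Set.mem_iInter₂.1 hs i hi)
        · intro s hs t hts ht
          exact Set.mem_iInter₂.2 fun l hl =>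
            (hΓ l).1.2 s (Set.mem_iInter₂.1 hs l hl) t hts ht
      · have := h J hJ1 (by omega)
        have e : (d : ℤ) - J.card = (n : ℤ) - 1 := by omega
        rwa [e] at this)
    0 (by rw [Finset.card_univ]; omega)
  rw [inter_eq] at key
  obtain ⟨b, hb, hb'⟩ := key (Finsupp.single ∅ 1)
    (Finsupp.single_mem_supported _ _ ⟨Or.inl rfl, rfl⟩) (by rw [hD_single]; simp)
  have hbne : b.support.Nonempty := by
    rw [Finsupp.support_nonempty_iff]
    rintro rfl
    rw [map_zero] at hb'
    exact one_ne_zero (Finsupp.single_eq_zero.1 hb'.symm)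
  obtain ⟨s, hs⟩ := hbne
  obtain ⟨h1, h2⟩ := hb hs
  rcases h1 with rfl | h1
  · simp at h2
  · exact ⟨s, by simpa using h1⟩
end

section
/- Let K be a simplicial complex whose vertex set is partitioned into m+1 nonempty parts V_0, …, V_m, and F a field. For S ⊆ {0,…,m}, let K_S denote the subcomplex induced by ⋃_{i∈S} V_i. If H̃_{|S|-2}(K_S, F) = 0 for every nonempty S ⊆ {0,…,m}, then K contains a rainbow simplex, i.e., a simplex with exactly one vertex in each V_i. -/
open Finset

variable (R : Type*) [CommRing R] (A : Type*) [AddCommGroup A] [Module R A]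
variable (V : Type*) [LinearOrder V]

namespace HSp

def eps {W : Type*} [LinearOrder W] (s : Finset W) (v : W) : ℤ :=
  (-1 : ℤ) ^ ((s.filter (fun w => w < v)).card)

theorem eps_erase_lt {W : Type*} [LinearOrder W] (s : Finset W) {i j : W} (hi : i ∈ s)
    (hij : i < j) : eps (s.erase i) j = - eps s j := by
  have h1 : s.filter (fun w => w < j) = insert i ((s.erase i).filter (fun w => w < j)) := by
    ext w
    by_cases hw : w = i
    · subst hw; simp [hi, hij]
    · simp [hw]
  unfold eps
  rw [h1, Finset.card_insert_of_notMem (by simp), pow_succ]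
  ring

theorem eps_erase_gt {W : Type*} [LinearOrder W] (s : Finset W) {i j : W}
    (hij : i < j) : eps (s.erase j) i = eps s i := by
  have h1 : s.filter (fun w => w < i) = ((s.erase j).filter (fun w => w < i)) := by
    ext w
    by_cases hw : w = j
    · subst hw; simp [hij.le]
    · simp [hw]
  unfold eps
  rw [h1]

theorem eps_swap {W : Type*} [LinearOrder W] (s : Finset W) {i j : W} (hi : i ∈ s) (hj : j ∈ s)
    (hij : i ≠ j) : eps s i * eps (s.erase i) j = - (eps s j * eps (s.erase j) i) := by
  rcases lt_or_gt_of_ne hij with h | h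
  · rw [eps_erase_lt s hi h, eps_erase_gt s h]; ring
  · rw [eps_erase_lt s hj h, eps_erase_gt s h]; ring

theorem sum_sum_eps {W : Type*} [LinearOrder W] {M : Type*} [AddCommGroup M] (s : Finset W)
    (g : Finset W → M) :
    ∑ i ∈ s, eps s i • ∑ j ∈ s.erase i, eps (s.erase i) j • g ((s.erase i).erase j) = 0 := by
  simp_rw [Finset.smul_sum, smul_smul]
  rw [Finset.sum_sigma']
  refine Finset.sum_involution (fun p _ => ⟨p.2, p.1⟩) ?_ ?_ ?_ ?_
  · rintro ⟨i, j⟩ hp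
    simp only [Finset.mem_sigma, Finset.mem_erase] at hp
    simp only
    rw [eps_swap s hp.1 hp.2.2 hp.2.1.symm, Finset.erase_right_comm, neg_smul]
    simp
  · rintro ⟨i, j⟩ hp _ he
    simp only [Finset.mem_sigma, Finset.mem_erase] at hp
    simp only [Sigma.mk.injEq] at he
    exact hp.2.1 he.1
  · rintro ⟨i, j⟩ hp
    simp only [Finset.mem_sigma, Finset.mem_erase] at hp ⊢
    exact ⟨hp.2.2, hp.2.1.symm, hp.1⟩
  · rintro ⟨i, j⟩ hp
    rfl

noncomputable def DD (F W : Type*) [Field F] [LinearOrder W] :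
    (Finset W →₀ F) →ₗ[F] (Finset W →₀ F) :=
  Finsupp.lsum F fun s => ∑ v ∈ s, eps s v • Finsupp.lsingle (R := F) (s.erase v)

theorem DD_single {F W : Type*} [Field F] [LinearOrder W] (s : Finset W) (a : F) :
    DD F W (Finsupp.single s a) = ∑ v ∈ s, eps s v • Finsupp.single (s.erase v) a := by
  simp [DD, LinearMap.sum_apply]

noncomputable def emb (F W : Type*) [Field F] [LinearOrder W] (n : ℕ) :
    Chains F W n →ₗ[F] (Finset W →₀ F) :=
  Finsupp.lmapDomain F F Subtype.val

theorem emb_single {F W : Type*} [Field F] [LinearOrder W] (n : ℕ)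
    (s : {s : Finset W // s.card = n + 1}) (a : F) :
    emb F W n (Finsupp.single s a) = Finsupp.single s.1 a := by
  simp [emb]

theorem emb_inj {F W : Type*} [Field F] [LinearOrder W] (n : ℕ) :
    Function.Injective (emb F W n) :=
  Finsupp.mapDomain_injective Subtype.val_injective

theorem DD_emb_succ {F W : Type*} [Field F] [LinearOrder W] (n : ℕ) (x : Chains F W (n + 1)) :
    DD F W (emb F W (n + 1) x) = emb F W n (bdry F F W n x) := by
  induction x using Finsupp.induction_linear with
  | zero => simp
  | add f g hf hg => simp only [map_add, hf, hg]
  | single s a =>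
    rw [emb_single, DD_single, bdry, Finsupp.lsum_single, LinearMap.sum_apply, map_sum,
      ← Finset.sum_attach]
    refine Finset.sum_congr rfl fun v _ => ?_
    rw [LinearMap.smul_apply, map_zsmul, Finsupp.lsingle_apply, emb_single]
    rfl

theorem DD_emb_zero {F W : Type*} [Field F] [LinearOrder W] (x : Chains F W 0) :
    DD F W (emb F W 0 x) = Finsupp.single ∅ (aug F F W x) := by
  induction x using Finsupp.induction_linear with
  | zero => simp
  | add f g hf hg => simp only [map_add, hf, hg, Finsupp.single_add]
  | single s a =>
    obtain ⟨s, hs⟩ := s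
    obtain ⟨v, rfl⟩ := Finset.card_eq_one.1 hs
    rw [emb_single, DD_single, aug, Finsupp.lsum_single]
    simp only [Finset.sum_singleton, eps, Finset.filter_singleton, lt_irrefl, if_false,
      Finset.card_empty, pow_zero, one_smul, Finset.erase_singleton, LinearMap.id_apply]

/-- chain of degree `k` (card `k`) in the induced complex, allowing the empty face -/
def Good {F W I : Type*} [Field F] [LinearOrder W] [DecidableEq I] (K : Set (Finset W)) (c : W → I)
    (S : Finset I) (k : ℕ) : Submodule F (Finset W →₀ F) :=
  Finsupp.supported F F {s | (s = ∅ ∨ s ∈ K) ∧ s.card = k ∧ ∀ v ∈ s, c v ∈ S}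

theorem exists_emb {F W I : Type*} [Field F] [LinearOrder W] [DecidableEq I]
    (K : Set (Finset W)) (c : W → I)
    (S : Finset I) (n : ℕ) (x : Finset W →₀ F) (hx : x ∈ Good K c S (n + 1)) :
    ∃ y ∈ chainsIn F F W {s ∈ K | ∀ v ∈ s, c v ∈ S} n, emb F W n y = x := by
  have hx' := (Finsupp.mem_supported _ _).1 hx
  refine ⟨x.comapDomain Subtype.val Subtype.val_injective.injOn, ?_, ?_⟩
  · rw [chainsIn, Finsupp.mem_supported]
    intro s hs
    simp only [Finsupp.comapDomain_support, Finset.coe_preimage, Set.mem_preimage] at hs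
    obtain ⟨h1, h2, h3⟩ := hx' hs
    refine ⟨h1.resolve_left ?_, h3⟩
    intro h0
    rw [h0] at h2
    simp at h2
  · refine Finsupp.mapDomain_comapDomain _ Subtype.val_injective _ ?_
    intro s hs
    exact ⟨⟨s, (hx' hs).2.1⟩, rfl⟩

theorem emb_good {F W I : Type*} [Field F] [LinearOrder W] [DecidableEq I]
    (K : Set (Finset W)) (c : W → I)
    (S : Finset I) (n : ℕ) (y : Chains F W n)
    (hy : y ∈ chainsIn F F W {s ∈ K | ∀ v ∈ s, c v ∈ S} n) :
    emb F W n y ∈ Good K c S (n + 1) := by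
  classical
  rw [Good, Finsupp.mem_supported]
  rw [chainsIn, Finsupp.mem_supported] at hy
  intro s hs
  obtain ⟨t, ht, rfl⟩ := Finset.mem_image.1 (Finsupp.mapDomain_support hs)
  have := hy ht
  exact ⟨Or.inr this.1, t.2, this.2⟩

theorem fill {F W I : Type*} [Field F] [LinearOrder W] [DecidableEq I]
    (K : Set (Finset W)) (hK : IsComplex K) (c : W → I)
    (S : Finset I) (k : ℕ) (hS : S.card = k + 1)
    (h : RedHVanish F F W {s ∈ K | ∀ v ∈ s, c v ∈ S} ((S.card : ℤ) - 2))
    (x : Finset W →₀ F) (hx : x ∈ Good K c S k) (hd : DD F W x = 0) :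
    ∃ y ∈ Good (F := F) K c S (k + 1), DD F W y = x := by
  rw [hS] at h
  match k, h with
  | 0, h =>
    have h' : ({s ∈ K | ∀ v ∈ s, c v ∈ S} : Set (Finset W)).Nonempty := by
      simpa [RedHVanish] using h
    obtain ⟨s, hs, hsc⟩ := h'
    obtain ⟨v, hv⟩ := hK.1 s hs
    refine ⟨Finsupp.single {v} (x ∅), ?_, ?_⟩
    · refine Finsupp.single_mem_supported _ _ ?_
      refine ⟨Or.inr (hK.2 s hs _ (by simpa using hv) (by simp)), by simp, by simpa using hsc v hv⟩
    · rw [DD_single]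
      simp only [Finset.sum_singleton, eps, Finset.filter_singleton, lt_irrefl, if_false,
        Finset.card_empty, pow_zero, one_smul, Finset.erase_singleton]
      rw [Good, Finsupp.mem_supported] at hx
      ext t
      rw [Finsupp.single_apply]
      split_ifs with ht
      · rw [ht]
      · by_contra hne
        have := hx (Finsupp.mem_support_iff.2 (Ne.symm hne))
        exact ht (Finset.card_eq_zero.1 this.2.1).symm
  | n + 1, h =>
    have h' : Subsingleton (redH F F W {s ∈ K | ∀ v ∈ s, c v ∈ S} n) := by
      have e1 : (((n + 1 + 1 : ℕ) : ℤ) - 2) = (n : ℤ) := by push_cast; ring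
      rw [e1, RedHVanish, if_neg (by omega), if_neg (by omega)] at h
      simpa using h
    obtain ⟨y, hy, rfl⟩ := exists_emb K c S n x hx
    have hcyc : y ∈ cycles F F W n := by
      cases n with
      | zero =>
        rw [DD_emb_zero] at hd
        rw [cycles, LinearMap.mem_ker]
        simpa using hd
      | succ n =>
        rw [DD_emb_succ] at hd
        rw [cycles, LinearMap.mem_ker]
        exact emb_inj n (by rw [hd, map_zero])
    have hq := Submodule.Quotient.subsingleton_iff.1 h'
    have hm : (⟨y, hcyc, hy⟩ : cyclesIn F F W {s ∈ K | ∀ v ∈ s, c v ∈ S} n) ∈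
      Submodule.comap (cyclesIn F F W {s ∈ K | ∀ v ∈ s, c v ∈ S} n).subtype
        (boundariesIn F F W {s ∈ K | ∀ v ∈ s, c v ∈ S} n) := by rw [hq]; trivial
    obtain ⟨z, hz, hzy⟩ := hm
    refine ⟨emb F W (n + 1) z, emb_good K c S (n + 1) z hz, ?_⟩
    rw [DD_emb_succ, hzy]
    rfl

theorem exists_g {F W I : Type*} [Field F] [LinearOrder W] [LinearOrder I]
    (K : Set (Finset W)) (hK : IsComplex K) (c : W → I)
    (h : ∀ S : Finset I, S.Nonempty →
      RedHVanish F F W {s ∈ K | ∀ v ∈ s, c v ∈ S} ((S.card : ℤ) - 2)) (k : ℕ) :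
    ∃ g : Finset I → (Finset W →₀ F), g ∅ = Finsupp.single ∅ 1 ∧
      ∀ S : Finset I, S.card ≤ k → g S ∈ Good K c S S.card ∧
        DD F W (g S) = ∑ i ∈ S, eps S i • g (S.erase i) := by
  induction k with
  | zero =>
    refine ⟨fun _ => Finsupp.single ∅ 1, rfl, fun S hS => ?_⟩
    obtain rfl : S = ∅ := by simpa using hS
    refine ⟨Finsupp.single_mem_supported _ _ ?_, by simp [DD_single]⟩
    simp
  | succ k ih =>
    obtain ⟨g, g0, hg⟩ := ih
    have key : ∀ S : Finset I, S.card = k + 1 → ∃ y ∈ Good (F := F) K c S (k + 1),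
        DD F W y = ∑ i ∈ S, eps S i • g (S.erase i) := by
      intro S hS
      have hc : ∀ i ∈ S, (S.erase i).card = k := by
        intro i hi; rw [Finset.card_erase_of_mem hi, hS]; rfl
      refine fill K hK c S k hS (h S (Finset.card_pos.1 (by omega))) _ ?_ ?_
      · refine Submodule.sum_mem _ fun i hi => ?_
        refine zsmul_mem ?_ _
        have := (hg (S.erase i) (hc i hi).le).1
        rw [hc i hi] at this
        refine Finsupp.supported_mono ?_ this
        rintro s ⟨h1, h2, h3⟩
        exact ⟨h1, h2, fun v hv => Finset.mem_of_mem_erase (h3 v hv)⟩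
      · rw [map_sum, ← sum_sum_eps S g]
        refine Finset.sum_congr rfl fun i hi => ?_
        rw [map_zsmul, (hg (S.erase i) (hc i hi).le).2]
    choose! f hf using key
    have hlow : ∀ S : Finset I, S.card ≤ k → (if S.card = k + 1 then f S else g S) = g S := by
      intro S hS; rw [if_neg (by omega)]
    refine ⟨fun S => if S.card = k + 1 then f S else g S, ?_, ?_⟩
    · simpa using g0
    · intro S hS
      have hsum : ∑ i ∈ S, eps S i • (if (S.erase i).card = k + 1 then f (S.erase i)
          else g (S.erase i)) = ∑ i ∈ S, eps S i • g (S.erase i) := by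
        refine Finset.sum_congr rfl fun i hi => ?_
        rw [hlow]
        rw [Finset.card_erase_of_mem hi]; omega
      simp only [hsum]
      by_cases hk : S.card = k + 1
      · rw [if_pos hk, hk]; exact hf S hk
      · rw [if_neg hk]; exact hg S (by omega)

/-- exterior product of basis vectors along a list of colours -/
noncomputable def ee (F : Type*) [Field F] {n : ℕ} (i : Fin n) : ExteriorAlgebra F (Fin n → F) :=
  ExteriorAlgebra.ι F (Pi.single i 1)

noncomputable def Pl (F : Type*) [Field F] {n : ℕ} (l : List (Fin n)) :
    ExteriorAlgebra F (Fin n → F) := (l.map (ee F)).prod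

theorem Pl_cons {F : Type*} [Field F] {n : ℕ} (i : Fin n) (l : List (Fin n)) :
    Pl F (i :: l) = ee F i * Pl F l := by simp [Pl]

theorem ee_mul_Pl {F : Type*} [Field F] {n : ℕ} (i : Fin n) (l : List (Fin n)) (h : i ∈ l) :
    ee F i * Pl F l = 0 := by
  induction l with
  | nil => simp at h
  | cons j l ih =>
    rw [Pl_cons, ← mul_assoc]
    by_cases hij : i = j
    · subst hij
      rw [ee, ExteriorAlgebra.ι_sq_zero, zero_mul]
    · have hs : ee F i * ee F j = - (ee F j * ee F i) :=
        eq_neg_of_add_eq_zero_left (ExteriorAlgebra.ι_add_mul_swap _ _)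
      rw [hs, neg_mul, mul_assoc, ih (by simpa [hij] using h)]
      simp

theorem Pl_not_nodup {F : Type*} [Field F] {n : ℕ} (l : List (Fin n)) (h : ¬ l.Nodup) :
    Pl F l = 0 := by
  induction l with
  | nil => simp at h
  | cons j l ih =>
    rw [Pl_cons]
    by_cases hj : j ∈ l
    · exact ee_mul_Pl j l hj
    · rw [ih (by simpa [hj] using h), mul_zero]

theorem Pl_pigeon {F : Type*} [Field F] {n : ℕ} (l : List (Fin n)) (S : Finset (Fin n))
    (hl : ∀ i ∈ l, i ∈ S) (hc : S.card < l.length) : Pl F l = 0 := by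
  refine Pl_not_nodup l fun hn => ?_
  rw [← List.toFinset_card_of_nodup hn] at hc
  exact absurd (Finset.card_le_card (fun i hi => hl i (by simpa using hi))) (not_le.2 hc)

noncomputable def con {F : Type*} [Field F] {n : ℕ} (d : Module.Dual F (Fin n → F)) :
    ExteriorAlgebra F (Fin n → F) →ₗ[F] ExteriorAlgebra F (Fin n → F) :=
  CliffordAlgebra.contractLeft (Q := (0 : QuadraticForm F (Fin n → F))) d

theorem con_mul {F : Type*} [Field F] {n : ℕ} (d : Module.Dual F (Fin n → F)) (i : Fin n)
    (x : ExteriorAlgebra F (Fin n → F)) :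
    con d (ee F i * x) = d (Pi.single i 1) • x - ee F i * con d x :=
  CliffordAlgebra.contractLeft_ι_mul _ _ _

theorem con_one {F : Type*} [Field F] {n : ℕ} (d : Module.Dual F (Fin n → F)) :
    con d 1 = 0 := CliffordAlgebra.contractLeft_one _ _

theorem con_proj_Pl {F : Type*} [Field F] {n : ℕ} (i : Fin n) (l : List (Fin n)) (h : i ∉ l) :
    con (LinearMap.proj i) (Pl F l) = 0 := by
  induction l with
  | nil => simp [Pl, con_one]
  | cons j l ih =>
    simp only [List.mem_cons, not_or] at h
    rw [Pl_cons, con_mul, ih h.2]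
    simp [h.1]

noncomputable def dsum (F : Type*) [Field F] (n : ℕ) : Module.Dual F (Fin n → F) :=
  ∑ i, LinearMap.proj i

theorem dsum_single {F : Type*} [Field F] {n : ℕ} (i : Fin n) :
    dsum F n (Pi.single i 1) = 1 := by
  simp [dsum, LinearMap.sum_apply]

noncomputable def Ps (F : Type*) [Field F] {W : Type*} [LinearOrder W] {n : ℕ} (c : W → Fin n)
    (s : Finset W) : ExteriorAlgebra F (Fin n → F) := Pl F ((s.sort (· ≤ ·)).map c)

theorem Ps_insert {F : Type*} [Field F] {W : Type*} [LinearOrder W] {n : ℕ} (c : W → Fin n)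
    (s : Finset W) (a : W) (ha : ∀ b ∈ s, a < b) :
    Ps F c (insert a s) = ee F (c a) * Ps F c s := by
  rw [Ps, Finset.sort_insert (· ≤ ·) (fun b hb => (ha b hb).le) (fun h => lt_irrefl _ (ha a h)),
    List.map_cons, Pl_cons]
  rfl

theorem con_Ps {F : Type*} [Field F] {W : Type*} [LinearOrder W] {n : ℕ} (c : W → Fin n)
    (s : Finset W) :
    con (dsum F n) (Ps F c s) = ∑ v ∈ s, eps s v • Ps F c (s.erase v) := by
  induction s using Finset.induction_on_min with
  | empty => simp [Ps, Pl, con_one]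
  | insert a s ha ih =>
    have hn : a ∉ s := fun h => lt_irrefl _ (ha a h)
    rw [Ps_insert c s a ha, con_mul, dsum_single, one_smul, ih, Finset.sum_insert hn,
      Finset.erase_insert hn, sub_eq_add_neg, Finset.mul_sum, ← Finset.sum_neg_distrib]
    congr 1
    · have : (insert a s).filter (fun w => w < a) = ∅ := by
        rw [Finset.filter_eq_empty_iff]
        intro b hb
        rcases Finset.mem_insert.1 hb with rfl | hb
        · exact lt_irrefl _
        · exact (ha b hb).le.not_gt
      simp [eps, this]
    · refine Finset.sum_congr rfl fun v hv => ?_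
      have h1 := eps_erase_lt (insert a s) (Finset.mem_insert_self a s) (ha v hv)
      rw [Finset.erase_insert hn] at h1
      rw [Finset.erase_insert_of_ne (ha v hv).ne,
        Ps_insert c (s.erase v) a (fun b hb => ha b (Finset.mem_of_mem_erase hb)), h1]
      rw [mul_smul_comm, neg_smul, neg_neg]

noncomputable def Phi (F : Type*) [Field F] {W : Type*} [LinearOrder W] {n : ℕ} (c : W → Fin n) :
    (Finset W →₀ F) →ₗ[F] ExteriorAlgebra F (Fin n → F) :=
  Finsupp.linearCombination F (Ps F c)

theorem con_Phi {F : Type*} [Field F] {W : Type*} [LinearOrder W] {n : ℕ} (c : W → Fin n)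
    (x : Finset W →₀ F) : con (dsum F n) (Phi F c x) = Phi F c (DD F W x) := by
  induction x using Finsupp.induction_linear with
  | zero => simp
  | add f g hf hg => simp only [map_add, hf, hg]
  | single s a =>
    rw [DD_single, map_sum, Phi, Finsupp.linearCombination_single, map_smul, con_Ps,
      Finset.smul_sum]
    refine Finset.sum_congr rfl fun v _ => ?_
    rw [map_zsmul, Finsupp.linearCombination_single, smul_comm]

theorem lin_zero {F : Type*} [Field F] {W : Type*} [LinearOrder W] {n : ℕ} (c : W → Fin n)
    (L : ExteriorAlgebra F (Fin n → F) →ₗ[F] ExteriorAlgebra F (Fin n → F))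
    (T : Set (Finset W)) (x : Finset W →₀ F) (hx : x ∈ Finsupp.supported F F T)
    (hT : ∀ s ∈ T, L (Ps F c s) = 0) : L (Phi F c x) = 0 := by
  rw [Phi, Finsupp.linearCombination_apply, Finsupp.sum, map_sum]
  refine Finset.sum_eq_zero fun s hs => ?_
  rw [map_smul, hT s ((Finsupp.mem_supported _ _).1 hx hs), smul_zero]

theorem ee_Phi {F : Type*} [Field F] {W : Type*} [LinearOrder W] {n : ℕ} (c : W → Fin n)
    (K : Set (Finset W)) (S : Finset (Fin n)) (i : Fin n) (hi : i ∈ S)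
    (x : Finset W →₀ F) (hx : x ∈ Good K c S S.card) : ee F i * Phi F c x = 0 := by
  refine lin_zero c (LinearMap.mulLeft F (ee F i)) _ x hx ?_
  rintro s ⟨-, h2, h3⟩
  rw [LinearMap.mulLeft_apply, Ps, ← Pl_cons]
  refine Pl_pigeon _ S ?_ ?_
  · intro j hj
    simp only [List.mem_cons, List.mem_map, Finset.mem_sort] at hj
    rcases hj with rfl | ⟨v, hv, rfl⟩
    · exact hi
    · exact h3 v hv
  · simp [h2]

theorem con_proj_Phi {F : Type*} [Field F] {W : Type*} [LinearOrder W] {n : ℕ} (c : W → Fin n)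
    (K : Set (Finset W)) (S : Finset (Fin n)) (i : Fin n) (hi : i ∉ S) (k : ℕ)
    (x : Finset W →₀ F) (hx : x ∈ Good K c S k) :
    con (LinearMap.proj i) (Phi F c x) = 0 := by
  refine lin_zero c (con (LinearMap.proj i)) _ x hx ?_
  rintro s ⟨-, h2, h3⟩
  refine con_proj_Pl _ _ ?_
  simp only [List.mem_map, Finset.mem_sort]
  rintro ⟨v, hv, rfl⟩
  exact hi (h3 v hv)

theorem Phi_ne_zero {F : Type*} [Field F] {W : Type*} [LinearOrder W] {n : ℕ} (c : W → Fin n)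
    (K : Set (Finset W)) (g : Finset (Fin n) → (Finset W →₀ F)) (g0 : g ∅ = Finsupp.single ∅ 1)
    (hg : ∀ S : Finset (Fin n), g S ∈ Good K c S S.card ∧
        DD F W (g S) = ∑ i ∈ S, eps S i • g (S.erase i)) (S : Finset (Fin n)) :
    Phi F c (g S) ≠ 0 := by
  induction S using Finset.induction_on with
  | empty => simp [g0, Phi, Ps, Pl]
  | insert i S hi ih =>
    intro h0
    have h1 := con_Phi c (g (insert i S))
    rw [h0, map_zero, (hg _).2, map_sum] at h1
    have h2 : ee F i * ∑ j ∈ insert i S, Phi F c (eps (insert i S) j • g ((insert i S).erase j))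
        = 0 := by rw [← h1, mul_zero]
    rw [Finset.mul_sum, Finset.sum_insert hi, Finset.erase_insert hi, Finset.sum_eq_zero,
      add_zero, map_zsmul, mul_smul_comm] at h2
    · have h3 : ee F i * Phi F c (g S) = 0 := by
        unfold eps at h2
        rcases neg_one_pow_eq_or ℤ ((insert i S).filter (fun w => w < i)).card with h | h
        · rw [h] at h2; simpa using h2
        · rw [h] at h2; simpa using h2
      have h4 := con_mul (LinearMap.proj i) i (Phi F c (g S))
      rw [h3, con_proj_Phi c K S i hi _ _ (hg S).1] at h4
      apply ih
      simpa using h4.symm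
    · intro j hj
      have hij : i ≠ j := fun h => hi (h ▸ hj)
      rw [map_zsmul, mul_smul_comm, ee_Phi c K _ i _ _ (hg _).1, smul_zero]
      simp [hij]

end HSp

/-- Homological Sperner-type lemma (strengthened Meshulam lemma): if
`H̃_{|S|-2}(K_S, F) = 0` for every nonempty set `S` of colours, then `K` contains a
rainbow simplex. -/
theorem homological_sperner {V : Type*} [LinearOrder V] (F : Type*) [Field F] (m : ℕ)
    (K : Set (Finset V)) (hK : IsComplex K) (hvert : ∀ v : V, {v} ∈ K)
    (c : V → Fin (m + 1)) (hc : Function.Surjective c)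
    (h : ∀ S : Finset (Fin (m + 1)), S.Nonempty →
      RedHVanish F F V {s ∈ K | ∀ v ∈ s, c v ∈ S} ((S.card : ℤ) - 2)) :
    ∃ s ∈ K, ∀ i : Fin (m + 1), ∃! v, v ∈ s ∧ c v = i := by
  obtain ⟨g, g0, hg⟩ := HSp.exists_g (F := F) K hK c h (m + 1)
  have hg' := fun S : Finset (Fin (m + 1)) => hg S (by simpa using Finset.card_le_univ S)
  have hne := HSp.Phi_ne_zero c K g g0 hg' Finset.univ
  by_contra hcon
  apply hne
  refine HSp.lin_zero c LinearMap.id _ _ (hg' Finset.univ).1 ?_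
  rintro s ⟨h1, h2, -⟩
  rw [Finset.card_univ, Fintype.card_fin] at h2
  have hsK : s ∈ K := h1.resolve_left (by rintro rfl; simp at h2)
  refine HSp.Pl_not_nodup _ fun hn => hcon ⟨s, hsK, ?_⟩
  have hinj : ∀ x ∈ s, ∀ y ∈ s, c x = c y → x = y := by
    intro x hx y hy hxy
    exact List.inj_on_of_nodup_map hn (by simpa using hx) (by simpa using hy) hxy
  have himg : s.image c = Finset.univ := by
    apply Finset.eq_univ_of_card
    rw [Finset.card_image_of_injOn (fun x hx y hy => hinj x hx y hy), h2, Fintype.card_fin]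
  intro i
  obtain ⟨v, hv, hvi⟩ := Finset.mem_image.1 (himg ▸ Finset.mem_univ i : i ∈ s.image c)
  exact ⟨v, ⟨hv, hvi⟩, fun y hy => hinj y hy.1 v hv (hy.2.trans hvi.symm)⟩
end

section
/- Let K be a simplicial complex whose vertex set is partitioned into parts V_0,…,V_m, with H̃_{m-1}(K, F) = 0 for a field F, and let k be an integer with -1 ≤ k ≤ m-1. For S ⊆ {0,…,m}, let K_S be the subcomplex induced by ⋃_{i∈S} V_i, and let K̃_S be the subcomplex of all simplices of K whose set of colours does not contain S. Suppose for every S ⊆ {0,…,m}: (1s) H̃_{k-|S|}(K_{{0,…,m}∖S}, F) = 0 whenever 1 ≤ |S| ≤ k+1, and (2s) H̃_{|S|-2}(K̃_S, F) = 0 whenever k+2 ≤ |S| ≤ m. Then K contains a rainbow simplex. -/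
open Finset

variable (R : Type*) [CommRing R] (A : Type*) [AddCommGroup A] [Module R A]
variable (V : Type*) [LinearOrder V]

section HelperOne

/-- The sign of `a` in `s`. -/
def sg {α : Type*} [LinearOrder α] (a : α) (s : Finset α) : ℤ :=
  (-1 : ℤ) ^ ((s.filter (fun w => w < a)).card)

lemma sg_mul_self {α : Type*} [LinearOrder α] (a : α) (s : Finset α) : sg a s * sg a s = 1 := by
  unfold sg
  rw [← mul_pow]; simp

lemma sg_smul_cancel {α M : Type*} [LinearOrder α] [AddCommGroup M] {a : α} {s : Finset α}
    {x : M} (h : sg a s • x = 0) : x = 0 := by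
  rw [← one_smul ℤ x, ← sg_mul_self a s, ← smul_smul, h, smul_zero]

lemma sg_singleton {α : Type*} [LinearOrder α] (a : α) : sg a {a} = 1 := by
  simp [sg, Finset.filter_singleton]

lemma sg_anti_lt {α : Type*} [LinearOrder α] {a b : α} {s : Finset α} (ha : a ∈ s)
    (hab : a < b) :
    sg a s * sg b (s.erase a) = -(sg b s * sg a (s.erase b)) := by
  unfold sg
  have h1 : (s.erase b).filter (fun w => w < a) = s.filter (fun w => w < a) := by
    ext x; simp only [mem_filter, mem_erase]
    constructor
    · rintro ⟨⟨_, h⟩, h'⟩; exact ⟨h, h'⟩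
    · rintro ⟨h, h'⟩; exact ⟨⟨(h'.trans hab).ne, h⟩, h'⟩
  have h2 : (s.erase a).filter (fun w => w < b) = (s.filter (fun w => w < b)).erase a := by
    ext x; simp only [mem_filter, mem_erase]; tauto
  have h3 : a ∈ s.filter (fun w => w < b) := by simp [ha, hab]
  have h4 := Finset.card_erase_add_one h3
  rw [h1, h2, ← h4, pow_succ]; ring

lemma sg_anti {α : Type*} [LinearOrder α] {a b : α} {s : Finset α} (ha : a ∈ s) (hb : b ∈ s)
    (hab : a ≠ b) :
    sg a s * sg b (s.erase a) = -(sg b s * sg a (s.erase b)) := by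
  rcases lt_or_gt_of_ne hab with h | h
  · exact sg_anti_lt ha h
  · rw [sg_anti_lt hb h]; simp

lemma sum_anti {α M : Type*} [LinearOrder α] [AddCommGroup M] (s : Finset α) (Φ : α → α → M)
    (hΦ : ∀ a b, Φ a b = Φ b a) :
    ∑ a ∈ s, ∑ b ∈ s.erase a, (sg a s * sg b (s.erase a)) • Φ a b = 0 := by
  rw [Finset.sum_sigma']
  refine Finset.sum_involution (fun x _ => ⟨x.2, x.1⟩) ?_ ?_ ?_ ?_
  · rintro ⟨a, b⟩ h
    simp only [mem_sigma, mem_erase] at h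
    simp only
    rw [sg_anti h.1 h.2.2 (Ne.symm h.2.1), hΦ a b, neg_smul, neg_add_cancel]
  · rintro ⟨a, b⟩ h _ h'
    simp only [mem_sigma, mem_erase] at h
    simp only [Sigma.mk.injEq] at h'
    exact h.2.1 h'.1
  · rintro ⟨a, b⟩ h
    simp only [mem_sigma, mem_erase] at h ⊢
    exact ⟨h.2.2, Ne.symm h.2.1, h.1⟩
  · rintro ⟨a, b⟩ h; rfl

/-- Coboundary of a family indexed by finite sets. -/
def dl {α M : Type*} [LinearOrder α] [AddCommGroup M] (f : Finset α → M) (T : Finset α) : M :=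
  ∑ i ∈ T, sg i T • f (T.erase i)

/-- Cone contraction of a family indexed by finite sets. -/
def hh {α M : Type*} [LinearOrder α] [AddCommGroup M] (b : α) (f : Finset α → M)
    (T : Finset α) : M :=
  if b ∈ T then 0 else sg b (insert b T) • f (insert b T)

lemma sum_erase_swap {α M : Type*} [LinearOrder α] [AddCommGroup M] (T : Finset α)
    (Φ : α → α → M) :
    ∑ a ∈ T, ∑ b ∈ T.erase a, Φ a b = ∑ b ∈ T, ∑ a ∈ T.erase b, Φ a b := by
  refine Finset.sum_comm' ?_
  intro x y; simp only [mem_erase]; tauto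

lemma dl_dl {α M : Type*} [LinearOrder α] [AddCommGroup M] (f : Finset α → M) (T : Finset α) :
    dl (dl f) T = 0 := by
  unfold dl
  rw [← sum_anti T (fun a b => f ((T.erase a).erase b))
    (fun a b => by rw [Finset.erase_right_comm])]
  simp only [Finset.smul_sum, smul_smul]

lemma dl_hh {α M : Type*} [LinearOrder α] [AddCommGroup M] (b : α) (f : Finset α → M)
    (T : Finset α) : dl (hh b f) T + hh b (dl f) T = f T := by
  by_cases hb : b ∈ T
  · have : dl (hh b f) T = sg b T • hh b f (T.erase b) := by
      unfold dl
      refine Finset.sum_eq_single_of_mem b hb ?_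
      intro i _ hi
      have : b ∈ T.erase i := by simp [hb, hi.symm]
      simp [hh, this]
    rw [this]
    simp [hh, hb, smul_smul, sg_mul_self]
  · have h2 : hh b (dl f) T = sg b (insert b T) • (sg b (insert b T) • f T +
        ∑ i ∈ T, sg i (insert b T) • f ((insert b T).erase i)) := by
      simp only [hh, hb, if_false, dl]
      rw [Finset.sum_insert hb, Finset.erase_insert hb]
    have h1 : dl (hh b f) T = - ∑ i ∈ T, (sg b (insert b T) * sg i (insert b T)) •
        f ((insert b T).erase i) := by
      unfold dl
      rw [← Finset.sum_neg_distrib]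
      refine Finset.sum_congr rfl fun i hi => ?_
      have hib : b ≠ i := fun h => hb (h ▸ hi)
      have h3 : b ∉ T.erase i := fun h => hb (Finset.mem_of_mem_erase h)
      have h4 : insert b (T.erase i) = (insert b T).erase i := by
        rw [Finset.erase_insert_of_ne hib]
      have h5 := sg_anti (s := insert b T) (a := b) (b := i) (by simp) (by simp [hi]) hib
      rw [Finset.erase_insert hb] at h5
      simp only [hh, h3, if_false, h4, smul_smul]
      rw [← neg_smul]
      congr 1
      -- sg i T * sg b (X - i) = - sg b X * sg i X
      have e1 := sg_mul_self b (insert b T)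
      have e2 := sg_mul_self i (insert b T)
      linear_combination (-(sg i T * sg b ((insert b T).erase i))) * e1
        + sg b (insert b T) * sg b ((insert b T).erase i) * h5
        + (-(sg b (insert b T) * sg i (insert b T))) * sg_mul_self b ((insert b T).erase i)
    rw [h1, h2, smul_add, smul_smul, sg_mul_self, one_smul, Finset.smul_sum]
    simp only [smul_smul]
    abel

lemma hh_zero_of {α M : Type*} [LinearOrder α] [AddCommGroup M] {b : α} {f : Finset α → M}
    {T : Finset α} (h : f (insert b T) = 0) : hh b f T = 0 := by
  unfold hh; split_ifs <;> simp [h]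

end HelperOne

section HelperTwo

/-- Augmented chains in all degrees. -/
abbrev Cc (F U : Type*) [Field F] : Type _ := Finset U →₀ F

/-- Weighted boundary operator. -/
noncomputable def Dw {F U : Type*} [Field F] [LinearOrder U] (u : U → F) : Cc F U →ₗ[F] Cc F U :=
  Finsupp.linearCombination F
    (fun s : Finset U => ∑ v ∈ s, sg v s • (Finsupp.single (s.erase v) (u v) : Cc F U))

lemma Dw_single {F U : Type*} [Field F] [LinearOrder U] (u : U → F) (s : Finset U) (a : F) :
    Dw u (Finsupp.single s a) =
      ∑ v ∈ s, sg v s • (Finsupp.single (s.erase v) (a * u v) : Cc F U) := by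
  simp only [Dw, Finsupp.linearCombination_single, Finset.smul_sum]
  refine Finset.sum_congr rfl fun v _ => ?_
  rw [smul_comm, Finsupp.smul_single, smul_eq_mul]

lemma Dw_Dw_single {F U : Type*} [Field F] [LinearOrder U] (u w : U → F) (s : Finset U) (a : F) :
    Dw u (Dw w (Finsupp.single s a)) =
      ∑ x ∈ s, ∑ y ∈ s.erase x, (sg x s * sg y (s.erase x)) •
        (Finsupp.single ((s.erase x).erase y) (a * w x * u y) : Cc F U) := by
  rw [Dw_single, map_sum]
  refine Finset.sum_congr rfl fun v _ => ?_
  rw [map_zsmul, Dw_single, Finset.smul_sum]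
  simp only [smul_smul]

lemma Dw_sq {F U : Type*} [Field F] [LinearOrder U] (u : U → F) (z : Cc F U) :
    Dw u (Dw u z) = 0 := by
  induction z using Finsupp.induction_linear with
  | zero => simp
  | add f g hf hg => simp [hf, hg]
  | single s a =>
    rw [Dw_Dw_single]
    refine sum_anti s (fun x y => (Finsupp.single ((s.erase x).erase y) (a * u x * u y) : Cc F U))
      (fun x y => ?_)
    rw [Finset.erase_right_comm]; congr 1; ring

lemma Dw_anti {F U : Type*} [Field F] [LinearOrder U] (u w : U → F) (z : Cc F U) :
    Dw u (Dw w z) = - Dw w (Dw u z) := by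
  rw [eq_neg_iff_add_eq_zero]
  induction z using Finsupp.induction_linear with
  | zero => simp
  | add f g hf hg =>
    simp only [map_add]
    rw [← add_zero (0 : Cc F U)]
    nth_rewrite 1 [← hf]
    rw [← hg]; abel
  | single s a =>
    rw [Dw_Dw_single, Dw_Dw_single, ← Finset.sum_add_distrib]
    rw [← sum_anti s (fun x y => (Finsupp.single ((s.erase x).erase y)
        (a * w x * u y + a * u x * w y) : Cc F U))
      (fun x y => by rw [Finset.erase_right_comm]; congr 1; ring)]
    refine Finset.sum_congr rfl fun x _ => ?_
    rw [← Finset.sum_add_distrib]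
    refine Finset.sum_congr rfl fun y _ => ?_
    rw [Finsupp.single_add, smul_add]

/-- Full boundary. -/
noncomputable abbrev bd {F U : Type*} [Field F] [LinearOrder U] : Cc F U →ₗ[F] Cc F U :=
  Dw (fun _ => (1 : F))

/-- Boundary in the colour `i`. -/
noncomputable def bi {F U : Type*} [Field F] [LinearOrder U] {ι : Type*} [DecidableEq ι]
    (c : U → ι) (i : ι) : Cc F U →ₗ[F] Cc F U :=
  Dw (fun v => if c v = i then (1 : F) else 0)

lemma bd_eq_sum {F U : Type*} [Field F] [LinearOrder U] {ι : Type*} [DecidableEq ι] [Fintype ι]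
    (c : U → ι) (z : Cc F U) : bd z = ∑ i, bi c i z := by
  induction z using Finsupp.induction_linear with
  | zero => simp
  | add f g hf hg => simp only [map_add, hf, hg, Finset.sum_add_distrib]
  | single s a =>
    simp only [bi, bd, Dw_single]
    rw [Finset.sum_comm]
    refine Finset.sum_congr rfl fun v _ => ?_
    rw [← Finset.smul_sum, ← Finsupp.single_finsetSum]
    simp

/-- Iterated colour boundary. -/
noncomputable def EE {F U : Type*} [Field F] [LinearOrder U] {ι : Type*} [LinearOrder ι]
    (c : U → ι) (T : Finset ι) : Cc F U →ₗ[F] Cc F U :=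
  (T.sort (· ≤ ·)).foldr (fun i f => f ∘ₗ bi c i) LinearMap.id

lemma EE_empty {F U : Type*} [Field F] [LinearOrder U] {ι : Type*} [LinearOrder ι]
    (c : U → ι) (z : Cc F U) : EE c ∅ z = z := by
  simp [EE]

lemma EE_insert {F U : Type*} [Field F] [LinearOrder U] {ι : Type*} [LinearOrder ι]
    (c : U → ι) (T : Finset ι) (a : ι) (ha : ∀ x ∈ T, a < x) (z : Cc F U) :
    EE c (insert a T) z = EE c T (bi c a z) := by
  unfold EE
  rw [Finset.sort_insert (· ≤ ·) (fun x hx => (ha x hx).le) (fun h => lt_irrefl _ (ha a h))]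
  simp

lemma EE_erase {F U : Type*} [Field F] [LinearOrder U] {ι : Type*} [LinearOrder ι]
    (c : U → ι) (T : Finset ι) : ∀ (j : ι) (_ : j ∈ T) (z : Cc F U),
    EE c (T.erase j) (bi c j z) = sg j T • EE c T z := by
  induction T using Finset.induction_on_min with
  | empty => simp
  | insert a T ha ih =>
    intro j hj z
    have haT : a ∉ T := fun h => lt_irrefl _ (ha a h)
    by_cases hja : j = a
    · subst hja
      have : sg j (insert j T) = 1 := by
        unfold sg
        rw [Finset.filter_false_of_mem]; · simp
        intro x hx
        rcases Finset.mem_insert.1 hx with rfl | hx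
        · simp
        · exact not_lt.2 (ha x hx).le
      rw [Finset.erase_insert haT, this, one_smul, EE_insert c T j ha]
    · have hjT : j ∈ T := by simpa [hja] using hj
      rw [Finset.erase_insert_of_ne (Ne.symm hja), EE_insert c _ a
        (fun x hx => ha x (Finset.mem_of_mem_erase hx)), EE_insert c _ a ha]
      have h1 : bi c a (bi c j z) = - bi c j (bi c a z) := Dw_anti _ _ _
      rw [h1, map_neg, ih j hjT, ← neg_smul]
      congr 1
      have : (insert a T).filter (fun w => w < j) = insert a (T.filter (fun w => w < j)) := by
        rw [Finset.filter_insert, if_pos (ha j hjT)]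
      unfold sg
      rw [this, Finset.card_insert_of_notMem (by simp [haT]), pow_succ]; ring

/-- The colour functional. -/
noncomputable def ep {F U : Type*} [Field F] [LinearOrder U] {ι : Type*} [LinearOrder ι]
    (c : U → ι) (T : Finset ι) : Cc F U →ₗ[F] F :=
  Finsupp.lapply ∅ ∘ₗ EE c T

lemma ep_erase {F U : Type*} [Field F] [LinearOrder U] {ι : Type*} [LinearOrder ι]
    (c : U → ι) (T : Finset ι) (j : ι) (hj : j ∈ T) (z : Cc F U) :
    ep c (T.erase j) (bi c j z) = sg j T • ep c T z := by
  simp only [ep, LinearMap.comp_apply, EE_erase c T j hj, map_zsmul]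

lemma ep_bi_mem {F U : Type*} [Field F] [LinearOrder U] {ι : Type*} [LinearOrder ι]
    (c : U → ι) (T : Finset ι) (j : ι) (hj : j ∈ T) (z : Cc F U) :
    ep c T (bi c j z) = 0 := by
  have h := ep_erase c T j hj (bi c j z)
  have h0 : bi c j (bi c j z) = 0 := Dw_sq _ z
  rw [h0, map_zero] at h
  exact sg_smul_cancel h.symm

lemma ep_bd {F U : Type*} [Field F] [LinearOrder U] {ι : Type*} [LinearOrder ι] [Fintype ι]
    (c : U → ι) (T : Finset ι) (z : Cc F U) :
    ep c T (bd z) = ∑ j ∈ Tᶜ, sg j (insert j T) • ep c (insert j T) z := by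
  rw [bd_eq_sum c, map_sum, ← Finset.sum_add_sum_compl T, Finset.sum_eq_zero, zero_add]
  · refine Finset.sum_congr rfl fun j hj => ?_
    have hj' : j ∉ T := by simpa using hj
    rw [← ep_erase c (insert j T) j (by simp), Finset.erase_insert hj']
  · intro j hj; exact ep_bi_mem c T j hj z

lemma ep_adj {F U : Type*} [Field F] [LinearOrder U] {ι : Type*} [LinearOrder ι] [Fintype ι]
    (c : U → ι) (f : Finset ι → Cc F U) :
    ∑ T, ep c T (dl f T) = ∑ T, ep c T (bd (f T)) := by
  simp only [ep_bd, dl, map_sum, map_zsmul]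
  rw [Finset.sum_sigma', Finset.sum_sigma']
  refine Finset.sum_bij' (fun x _ => ⟨x.1.erase x.2, x.2⟩) (fun x _ => ⟨insert x.2 x.1, x.2⟩)
    ?_ ?_ ?_ ?_ ?_
  · rintro ⟨T, i⟩ h; simp
  · rintro ⟨T, i⟩ h; simp
  · rintro ⟨T, i⟩ h
    simp only [mem_sigma, mem_univ, true_and] at h
    simp [Finset.insert_erase h]
  · rintro ⟨T, i⟩ h
    simp only [mem_sigma, mem_univ, true_and, mem_compl] at h
    simp [Finset.erase_insert h]
  · rintro ⟨T, i⟩ h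
    simp only [mem_sigma, mem_univ, true_and] at h
    simp [Finset.insert_erase h]

lemma ep_vanish {F U : Type*} [Field F] [LinearOrder U] {ι : Type*} [LinearOrder ι]
    (c : U → ι) (T : Finset ι) (z : Cc F U)
    (hz : ∀ s ∈ z.support, ¬ T ⊆ s.image c) : ep c T z = 0 := by
  rw [← Finsupp.sum_single z, Finsupp.sum, map_sum]
  refine Finset.sum_eq_zero fun s hs => ?_
  obtain ⟨j, hj, hjs⟩ := Finset.not_subset.1 (hz s hs)
  have h := ep_erase c T j hj (Finsupp.single s (z s))
  have h0 : bi c j (Finsupp.single s (z s)) = 0 := by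
    rw [bi, Dw_single]
    refine Finset.sum_eq_zero fun v hv => ?_
    have : c v ≠ j := fun e => hjs (Finset.mem_image.2 ⟨v, hv, e⟩)
    simp [this]
  rw [h0, map_zero] at h
  exact sg_smul_cancel h.symm

lemma ep_singleton {F U : Type*} [Field F] [LinearOrder U] {ι : Type*} [LinearOrder ι]
    (c : U → ι) (v : U) :
    ep c {c v} (Finsupp.single {v} (1 : F)) = 1 := by
  have h := ep_erase (F := F) c {c v} (c v) (by simp) (Finsupp.single {v} (1 : F))
  have h1 : sg (c v) {c v} = 1 := by simp [sg, Finset.filter_singleton]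
  have h2 : bi c (c v) (Finsupp.single {v} (1 : F)) = Finsupp.single ∅ 1 := by
    rw [bi, Dw_single]; simp [sg, Finset.filter_singleton]
  rw [h1, one_smul, h2] at h
  rw [← h]; simp [ep, EE_empty]

end HelperTwo

section HelperThree

/-- Augmented chains of the complex `X` on simplices with `n` vertices. -/
def Ch (F : Type*) {U : Type*} [Field F] (X : Set (Finset U)) (n : ℕ) :
    Submodule F (Cc F U) :=
  Finsupp.supported F F {s | (s ∈ X ∨ s = ∅) ∧ s.card = n}

lemma Ch_mono {F U : Type*} [Field F] {X Y : Set (Finset U)} {n : ℕ} (h : X ⊆ Y) :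
    Ch F X n ≤ Ch F Y n := by
  refine Finsupp.supported_mono ?_
  rintro s ⟨h1, h2⟩
  exact ⟨h1.imp (fun h' => h h') id, h2⟩

/-- Inclusion of `n`-chains into the augmented chains. -/
noncomputable def emb (F U : Type*) [Field F] [LinearOrder U] (n : ℕ) :
    Chains F U n →ₗ[F] Cc F U :=
  Finsupp.lmapDomain F F Subtype.val

lemma emb_single {F U : Type*} [Field F] [LinearOrder U] (n : ℕ)
    (s : {s : Finset U // s.card = n + 1}) (a : F) :
    emb F U n (Finsupp.single s a) = Finsupp.single s.1 a := by
  simp [emb, Finsupp.mapDomain_single]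

lemma emb_inj {F U : Type*} [Field F] [LinearOrder U] (n : ℕ) :
    Function.Injective (emb F U n) :=
  Finsupp.mapDomain_injective Subtype.val_injective

lemma emb_bdry {F U : Type*} [Field F] [LinearOrder U] (n : ℕ) (z : Chains F U (n + 1)) :
    bd (emb F U (n + 1) z) = emb F U n (bdry F F U n z) := by
  induction z using Finsupp.induction_linear with
  | zero => simp
  | add f g hf hg => simp only [map_add, hf, hg]
  | single s a =>
    rw [emb_single, Dw_single, bdry, Finsupp.lsum_single, LinearMap.sum_apply, map_sum,
      ← Finset.sum_attach]
    refine Finset.sum_congr rfl fun v _ => ?_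
    rw [LinearMap.smul_apply, map_zsmul, Finsupp.lsingle_apply, emb_single, mul_one]
    rfl

lemma emb_aug {F U : Type*} [Field F] [LinearOrder U] (z : Chains F U 0) :
    bd (emb F U 0 z) = Finsupp.single ∅ (aug F F U z) := by
  induction z using Finsupp.induction_linear with
  | zero => simp
  | add f g hf hg => simp only [map_add, hf, hg, Finsupp.single_add]
  | single s a =>
    obtain ⟨s, hs⟩ := s
    obtain ⟨v, rfl⟩ := Finset.card_eq_one.1 hs
    rw [emb_single, Dw_single, aug, Finsupp.lsum_single, Finset.sum_singleton, sg_singleton,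
      one_smul]
    simp

lemma emb_mem {F U : Type*} [Field F] [LinearOrder U] {X : Set (Finset U)} {n : ℕ}
    {z : Chains F U n} (hz : z ∈ chainsIn F F U X n) : emb F U n z ∈ Ch F X (n + 1) := by
  classical
  rw [Ch, Finsupp.mem_supported]
  intro s hs
  have := Finsupp.mapDomain_support (Finset.mem_coe.1 hs)
  obtain ⟨t, ht, rfl⟩ := Finset.mem_image.1 this
  rw [chainsIn, Finsupp.mem_supported] at hz
  exact ⟨Or.inl (hz ht), t.2⟩

lemma emb_surj {F U : Type*} [Field F] [LinearOrder U] {X : Set (Finset U)} {n : ℕ}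
    {z : Cc F U} (hz : z ∈ Ch F X (n + 1)) : ∃ y ∈ chainsIn F F U X n, emb F U n y = z := by
  rw [Ch, Finsupp.mem_supported] at hz
  refine ⟨Finsupp.comapDomain Subtype.val z Subtype.val_injective.injOn, ?_, ?_⟩
  · rw [chainsIn, Finsupp.mem_supported]
    intro s hs
    have hs' : s.1 ∈ z.support := by simpa using hs
    rcases (hz hs').1 with h | h
    · exact h
    · have := s.2; rw [h] at this; simp at this
  · refine Finsupp.mapDomain_comapDomain _ Subtype.val_injective _ ?_
    intro s hs
    exact ⟨⟨s, (hz hs).2⟩, rfl⟩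

lemma fill {F U : Type*} [Field F] [LinearOrder U] {X : Set (Finset U)} (hX : IsComplex X)
    {n : ℕ} (h : RedHVanish F F U X ((n : ℤ) - 1)) {z : Cc F U} (hz : z ∈ Ch F X n)
    (hb : bd z = 0) : ∃ y ∈ Ch F X (n + 1), bd y = z := by
  unfold RedHVanish at h
  rw [if_neg (by omega)] at h
  rcases n with _ | n
  · rw [if_pos (by simp)] at h
    obtain ⟨s, hs⟩ := h
    obtain ⟨v, hv⟩ := hX.1 s hs
    have hvX : {v} ∈ X := hX.2 s hs {v} (by simpa using hv) (by simp)
    have hz' : z = Finsupp.single ∅ (z ∅) := by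
      rw [Ch, Finsupp.mem_supported] at hz
      rw [← Finsupp.support_subset_singleton]
      intro s hs
      simpa using (hz hs).2
    refine ⟨Finsupp.single {v} (z ∅), ?_, ?_⟩
    · exact Finsupp.single_mem_supported F _ ⟨Or.inl hvX, by simp⟩
    · rw [Dw_single]
      simp only [Finset.sum_singleton, mul_one]
      rw [hz']
      simp [sg, Finset.filter_singleton]
  · rw [if_neg (by omega)] at h
    have hn : (((n + 1 : ℕ) : ℤ) - 1).toNat = n := by omega
    rw [hn] at h
    obtain ⟨y, hy, rfl⟩ := emb_surj hz
    have hcyc : y ∈ cyclesIn F F U X n := by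
      refine ⟨?_, hy⟩
      rcases n with _ | n
      · have := emb_aug y
        rw [hb] at this
        exact (Finsupp.single_eq_zero.1 this.symm)
      · have := emb_bdry n y
        rw [hb] at this
        exact emb_inj n (by rw [← this, map_zero])
    have hq := Subsingleton.elim (Submodule.Quotient.mk ⟨y, hcyc⟩ : redH F F U X n) 0
    rw [Submodule.Quotient.mk_eq_zero] at hq
    obtain ⟨w, hw, hwy⟩ := hq
    refine ⟨emb F U (n + 1) w, emb_mem hw, ?_⟩
    rw [emb_bdry, hwy]; rfl

end HelperThree

section HelperFour

/-- Simplices avoiding the colours in `S`. -/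
def KS {U ι : Type*} (K : Set (Finset U)) (c : U → ι) (S : Finset ι) : Set (Finset U) :=
  {s ∈ K | ∀ v ∈ s, c v ∉ S}

/-- Simplices avoiding some colour in `S`. -/
def Kt {U ι : Type*} (K : Set (Finset U)) (c : U → ι) (S : Finset ι) : Set (Finset U) :=
  {s ∈ K | ∃ j ∈ S, ∀ v ∈ s, c v ≠ j}

lemma ep_KS {F U : Type*} [Field F] [LinearOrder U] {ι : Type*} [LinearOrder ι]
    {K : Set (Finset U)} {c : U → ι} {S T : Finset ι} {n : ℕ} {z : Cc F U}
    (hz : z ∈ Ch F (KS K c S) n) {j : ι} (hS : j ∈ S) (hT : j ∈ T) : ep c T z = 0 := by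
  refine ep_vanish c T z fun s hs h => ?_
  rw [Ch, Finsupp.mem_supported] at hz
  obtain ⟨v, hv, e⟩ := Finset.mem_image.1 (h hT)
  rcases (hz hs).1 with h' | h'
  · exact h'.2 v hv (e ▸ hS)
  · simp [h'] at hv

lemma ep_Kt {F U : Type*} [Field F] [LinearOrder U] {ι : Type*} [LinearOrder ι]
    {K : Set (Finset U)} {c : U → ι} {T : Finset ι} {n : ℕ} {z : Cc F U}
    (hz : z ∈ Ch F (Kt K c T) n) (hT : T.Nonempty) : ep c T z = 0 := by
  refine ep_vanish c T z fun s hs h => ?_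
  rw [Ch, Finsupp.mem_supported] at hz
  rcases (hz hs).1 with h' | h'
  · obtain ⟨_, j, hj, h2⟩ := h'
    obtain ⟨v, hv, e⟩ := Finset.mem_image.1 (h hj)
    exact h2 v hv e
  · obtain ⟨j, hj⟩ := hT
    have := h hj
    simp [h'] at this

lemma KS_mono {U ι : Type*} {K : Set (Finset U)} {c : U → ι} {S T : Finset ι} (h : S ⊆ T) :
    KS K c T ⊆ KS K c S := fun _ hs => ⟨hs.1, fun v hv hS => hs.2 v hv (h hS)⟩

/-- One step of the descent. -/
def GG {M ι : Type*} [AddCommGroup M] [LinearOrder ι] (Y : Finset ι → Finset ι → M)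
    (S T : Finset ι) : M :=
  ∑ t ∈ T, sg t T • Y (insert t S) (T.erase t)

/-- The descent data at level `s`. -/
structure Lev {F U : Type*} [Field F] [LinearOrder U] {ι : Type*} [LinearOrder ι] [Fintype ι]
    (K : Set (Finset U)) (c : U → ι) (N s : ℕ) (Y : Finset ι → Finset ι → Cc F U) : Prop where
  fa : ∀ S, S.card = s → ∀ T, Y S T ∈ Ch F (KS K c S) T.card
  fb : ∀ S, S.card = s → ∀ T, ¬ (Disjoint S T ∧ s + T.card = N) → Y S T = 0
  fc : ∀ S, S.card = s → ∀ W, Disjoint S W → dl (Y S) W = 0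
  fd : ∀ S, S.card = s → ∑ T, ep c T (Y S T) = 1
  fe : ∀ S, S.card + 1 = s → ∀ T, Disjoint S T → bd (GG Y S T) = 0

variable {F U : Type*} [Field F] [LinearOrder U] {ι : Type*} [LinearOrder ι] [Fintype ι]
    {K : Set (Finset U)} {c : U → ι} {N s : ℕ} {Y : Finset ι → Finset ι → Cc F U}

lemma card_ins {S T : Finset ι} (hS : S.card + 1 = s) (hd : Disjoint S T) {t : ι} (ht : t ∈ T) :
    (insert t S).card = s := by
  rw [Finset.card_insert_of_notMem (fun h => Finset.disjoint_left.1 hd h ht), hS]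

lemma GG_mem (h : Lev K c N s Y) {S T : Finset ι} (hS : S.card + 1 = s) (hd : Disjoint S T) :
    GG Y S T ∈ Ch F (KS K c S) (T.card - 1) := by
  refine Submodule.sum_mem _ fun t ht => zsmul_mem ?_ _
  have := h.fa _ (card_ins hS hd ht) (T.erase t)
  rw [Finset.card_erase_of_mem ht] at this
  exact Ch_mono (KS_mono (Finset.subset_insert t S)) this

lemma GG_zero (h : Lev K c N s Y) {S T : Finset ι} (hS : S.card + 1 = s) (hd : Disjoint S T)
    (hc : S.card + T.card ≠ N) : GG Y S T = 0 := by
  refine Finset.sum_eq_zero fun t ht => ?_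
  rw [h.fb _ (card_ins hS hd ht), smul_zero]
  rintro ⟨-, h2⟩
  have := Finset.card_erase_add_one ht
  omega

lemma GG_dl (h : Lev K c N s Y) {S W : Finset ι} (hS : S.card + 1 = s) (hd : Disjoint S W) :
    dl (GG Y S) W = 0 := by
  have h1 : dl (GG Y S) W = - ∑ t ∈ W, sg t W • dl (Y (insert t S)) (W.erase t) := by
    unfold dl GG
    simp only [Finset.smul_sum, smul_smul]
    rw [sum_erase_swap, ← Finset.sum_neg_distrib]
    refine Finset.sum_congr rfl fun t ht => ?_
    rw [← Finset.sum_neg_distrib]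
    refine Finset.sum_congr rfl fun i hi => ?_
    rw [Finset.mem_erase] at hi
    rw [sg_anti hi.2 ht hi.1, neg_smul, Finset.erase_right_comm]
  rw [h1, neg_eq_zero]
  refine Finset.sum_eq_zero fun t ht => ?_
  rw [h.fc _ (card_ins hS hd ht), smul_zero]
  rw [Finset.disjoint_insert_left]
  exact ⟨by simp, hd.mono_right (Finset.erase_subset _ _)⟩

/-- Truncated version of `GG`. -/
noncomputable def GT (Y : Finset ι → Finset ι → Cc F U) (S T : Finset ι) : Cc F U :=
  if Disjoint S T then GG Y S T else 0

lemma GT_tr (h : Lev K c N s Y) {S : Finset ι} (hS : S.card + 1 = s) {b : ι} (hb : b ∉ S) :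
    ∑ R, ep c R (hh b (GT Y S) R) = 1 := by
  have hbs : (insert b S).card = s := by rw [Finset.card_insert_of_notMem hb, hS]
  rw [← h.fd (insert b S) hbs]
  refine Finset.sum_congr rfl fun R _ => ?_
  by_cases hbR : b ∈ R
  · rw [h.fb _ hbs]
    · simp [hh, hbR]
    · rintro ⟨h1, -⟩
      exact Finset.disjoint_left.1 h1 (Finset.mem_insert_self b S) hbR
  · by_cases hd : Disjoint S R
    · have hd' : Disjoint S (insert b R) := by
        rw [Finset.disjoint_insert_right]; exact ⟨hb, hd⟩
      simp only [hh, hbR, if_false, GT, hd', if_true, GG]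
      rw [Finset.sum_insert hbR, Finset.erase_insert hbR, smul_add, smul_smul, sg_mul_self,
        one_smul, map_add, map_zsmul, map_sum, Finset.sum_eq_zero, smul_zero, add_zero]
      intro t ht
      have h3 := h.fa _ (card_ins hS hd ht) ((insert b R).erase t)
      rw [map_zsmul, ep_KS h3 (Finset.mem_insert_self t S) ht, smul_zero]
    · rw [h.fb _ hbs, hh_zero_of]
      · rw [GT, if_neg]
        exact fun h' => hd (h'.mono_right (Finset.subset_insert _ _))
      · exact fun h' => hd (h'.1.mono_left (Finset.subset_insert _ _))

lemma bd_hh (b : ι) (f : Finset ι → Cc F U) (T : Finset ι) :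
    bd (hh b f T) = hh b (fun T => bd (f T)) T := by
  unfold hh; split_ifs <;> simp

lemma bd_dl (f : Finset ι → Cc F U) (T : Finset ι) :
    bd (dl f T) = dl (fun T => bd (f T)) T := by
  simp [dl, map_sum, map_zsmul]

lemma Lev_step (hι : s < Fintype.card ι) (h : Lev K c N (s + 1) Y) (hN : s + 1 ≤ N)
    (hf : ∀ S : Finset ι, S.card = s → ∀ z ∈ Ch F (KS K c S) (N - s - 1), bd z = 0 →
      ∃ y ∈ Ch F (KS K c S) (N - s), bd y = z) :
    ∃ Y' : Finset ι → Finset ι → Cc F U, Lev K c N s Y' := by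
  have hb : ∀ S : Finset ι, ∃ b, S.card = s → b ∉ S := by
    intro S
    by_cases hS : S.card = s
    · obtain ⟨b, hb⟩ := Finset.exists_mem_notMem_of_card_lt_card (s := S) (t := Finset.univ)
        (by rw [Finset.card_univ, hS]; exact hι)
      exact ⟨b, fun _ => hb.2⟩
    · have : Nonempty ι := Fintype.card_pos_iff.1 (by omega)
      exact ⟨Classical.choice this, fun h => absurd h hS⟩
  choose b hb using hb
  have hy : ∀ S T : Finset ι, ∃ y : Cc F U, S.card = s → y ∈ Ch F (KS K c S) T.card ∧
      bd y = GT Y S T ∧ (¬ (s + T.card = N) → y = 0) := by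
    intro S T
    by_cases hS : S.card = s
    swap
    · exact ⟨0, fun h => absurd h hS⟩
    by_cases hc : Disjoint S T ∧ s + T.card = N
    · obtain ⟨y, hy1, hy2⟩ := hf S hS (GG Y S T) (by
        have := GG_mem h (by omega) hc.1
        rwa [show T.card - 1 = N - s - 1 by omega] at this) (h.fe S (by omega) T hc.1)
      refine ⟨y, fun _ => ⟨?_, ?_, fun h' => absurd hc.2 h'⟩⟩
      · rwa [show T.card = N - s by omega]
      · rw [hy2, GT, if_pos hc.1]
    · refine ⟨0, fun _ => ⟨zero_mem _, ?_, fun _ => rfl⟩⟩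
      rw [GT]
      split_ifs with hd
      · rw [map_zero, GG_zero h (by omega) hd]
        exact fun h' => hc ⟨hd, by omega⟩
      · simp
  choose y hy using hy
  have key : ∀ S : Finset ι, S.card = s → ∀ T, dl (hh (b S) (y S)) T ∈ Ch F (KS K c S) T.card ∧
      (s + T.card ≠ N → dl (hh (b S) (y S)) T = 0) := by
    intro S hS T
    have hcard : ∀ i ∈ T, b S ∉ T.erase i → (insert (b S) (T.erase i)).card = T.card := by
      intro i hi hbi
      rw [Finset.card_insert_of_notMem hbi, Finset.card_erase_add_one hi]
    constructor
    · refine Submodule.sum_mem _ fun i hi => zsmul_mem ?_ _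
      unfold hh
      split_ifs with hbi
      · exact zero_mem _
      · refine zsmul_mem ?_ _
        rw [← hcard i hi hbi]
        exact (hy S _ hS).1
    · intro hne
      refine Finset.sum_eq_zero fun i hi => ?_
      unfold hh
      split_ifs with hbi
      · simp
      · rw [(hy S _ hS).2.2 (by rw [hcard i hi hbi]; exact hne)]; simp
  let Y' : Finset ι → Finset ι → Cc F U := fun S T =>
    if Disjoint S T then dl (hh (b S) (y S)) T else 0
  have hbd : ∀ S : Finset ι, S.card = s → ∀ T, Disjoint S T → bd (Y' S T) = GG Y S T := by
    intro S hS T hd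
    have e1 : (fun T => bd (y S T)) = GT Y S := funext fun T => (hy S T hS).2.1
    have e2 : (fun T => bd (hh (b S) (y S) T)) = hh (b S) (GT Y S) := by
      funext T; rw [bd_hh, e1]
    simp only [Y', if_pos hd]
    rw [bd_dl, e2]
    have e3 := dl_hh (b S) (GT Y S) T
    have e4 : hh (b S) (dl (GT Y S)) T = 0 := by
      refine hh_zero_of ?_
      have hd' : Disjoint S (insert (b S) T) := by
        rw [Finset.disjoint_insert_right]; exact ⟨hb S hS, hd⟩
      rw [← GG_dl h (by omega) hd']
      refine Finset.sum_congr rfl fun i _ => ?_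
      rw [GT, if_pos (hd'.mono_right (Finset.erase_subset _ _))]
    rw [e4, add_zero] at e3
    rw [e3, GT, if_pos hd]
  refine ⟨Y', ?_, ?_, ?_, ?_, ?_⟩
  · intro S hS T
    simp only [Y']
    split_ifs
    · exact (key S hS T).1
    · exact zero_mem _
  · intro S hS T hn
    simp only [Y']
    split_ifs with hd
    · exact (key S hS T).2 fun h' => hn ⟨hd, h'⟩
    · rfl
  · intro S hS W hd
    rw [← dl_dl (hh (b S) (y S)) W]
    refine Finset.sum_congr rfl fun i _ => ?_
    simp only [Y', if_pos (hd.mono_right (Finset.erase_subset i W))]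
  · intro S hS
    have e1 : ∑ T, ep c T (Y' S T) = ∑ T, ep c T (dl (hh (b S) (y S)) T) := by
      refine Finset.sum_congr rfl fun T _ => ?_
      simp only [Y']
      split_ifs with hd
      · rfl
      · obtain ⟨j, hj1, hj2⟩ := Finset.not_disjoint_iff.1 hd
        rw [ep_KS (key S hS T).1 hj1 hj2, map_zero]
    rw [e1, ep_adj, ← GT_tr h (S := S) (by omega) (hb S hS)]
    refine Finset.sum_congr rfl fun T _ => ?_
    rw [bd_hh]
    congr 2
    funext T
    exact (hy S T hS).2.1
  · intro S hS T hd
    rw [← sum_anti T (fun t t' => Y (insert t' (insert t S)) ((T.erase t).erase t'))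
      (fun t t' => by rw [Finset.insert_comm, Finset.erase_right_comm])]
    unfold GG
    rw [map_sum]
    refine Finset.sum_congr rfl fun t ht => ?_
    rw [map_zsmul, hbd _ (card_ins hS hd ht), GG, Finset.smul_sum]
    · simp only [smul_smul]
    · rw [Finset.disjoint_insert_left]
      exact ⟨by simp, hd.mono_right (Finset.erase_subset _ _)⟩

lemma sum_sg_two {M : Type*} [AddCommGroup M] (T : Finset ι) (hT : T.card = 2) (x : M) :
    ∑ t ∈ T, sg t T • x = 0 := by
  have h := sum_anti T (fun _ _ => x) (fun _ _ => rfl)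
  rw [← h]
  refine Finset.sum_congr rfl fun t ht => ?_
  have h1 : (T.erase t).card = 1 := by rw [Finset.card_erase_of_mem ht, hT]
  obtain ⟨u, hu⟩ := Finset.card_eq_one.1 h1
  rw [hu, Finset.sum_singleton, sg_singleton, mul_one]

lemma Lev_base (k : ℕ)
    (h0 : ∀ S : Finset ι, S.card = k + 1 → ∃ v, {v} ∈ K ∧ c v ∉ S) :
    ∃ Y : Finset ι → Finset ι → Cc F U, Lev K c (k + 2) (k + 1) Y := by
  have h0' : ∀ S : Finset ι, ∃ x : Cc F U, S.card = k + 1 →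
      ∃ v, {v} ∈ K ∧ c v ∉ S ∧ x = Finsupp.single {v} 1 := by
    intro S
    by_cases hS : S.card = k + 1
    · obtain ⟨v, h1, h2⟩ := h0 S hS
      exact ⟨Finsupp.single {v} 1, fun _ => ⟨v, h1, h2, rfl⟩⟩
    · exact ⟨0, fun h => absurd h hS⟩
  choose x hx using h0'
  refine ⟨fun S T => if Disjoint S T ∧ T.card = 1 then x S else 0, ?_, ?_, ?_, ?_, ?_⟩
  · intro S hS T
    split_ifs with h
    · obtain ⟨v, h1, h2, h3⟩ := hx S hS
      rw [h3, h.2]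
      exact Finsupp.single_mem_supported F _ ⟨Or.inl ⟨h1, by simpa using h2⟩, by simp⟩
    · exact zero_mem _
  · intro S hS T h
    rw [if_neg]
    exact fun h' => h ⟨h'.1, by omega⟩
  · intro S hS W hd
    by_cases hW : W.card = 2
    · refine Eq.trans (Finset.sum_congr rfl fun i hi => ?_) (sum_sg_two W hW (x S))
      beta_reduce
      rw [if_pos]
      exact ⟨hd.mono_right (Finset.erase_subset _ _), by rw [Finset.card_erase_of_mem hi, hW]⟩
    · refine Finset.sum_eq_zero fun i hi => ?_
      beta_reduce
      rw [if_neg, smul_zero]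
      rintro ⟨-, h⟩
      have := Finset.card_erase_add_one hi
      omega
  · intro S hS
    obtain ⟨v, h1, h2, h3⟩ := hx S hS
    rw [Finset.sum_eq_single {c v}]
    · rw [if_pos (by simpa using h2), h3, ep_singleton]
    · intro T _ hT
      split_ifs with h
      · rw [h3]
        refine ep_vanish c T _ fun s hs h' => ?_
        have := Finsupp.support_single_subset hs
        rw [Finset.mem_singleton] at this
        subst this
        rw [Finset.image_singleton] at h'
        exact hT (Finset.eq_of_subset_of_card_le h' (by simp [h.2]))
      · simp
    · simp
  · intro S hS T hd
    unfold GG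
    rw [map_sum]
    by_cases hT : T.card = 2
    · refine Eq.trans (Finset.sum_congr rfl fun i hi => ?_)
        (sum_sg_two T hT (Finsupp.single ∅ 1 : Cc F U))
      beta_reduce
      rw [if_pos, map_zsmul]
      · obtain ⟨v, h1, h2, h3⟩ := hx (insert i S) (card_ins hS hd hi)
        rw [h3, Dw_single, Finset.sum_singleton, sg_singleton]
        simp
      · refine ⟨?_, by rw [Finset.card_erase_of_mem hi, hT]⟩
        rw [Finset.disjoint_insert_left]
        exact ⟨by simp, hd.mono_right (Finset.erase_subset _ _)⟩
    · refine Finset.sum_eq_zero fun i hi => ?_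
      beta_reduce
      rw [if_neg, smul_zero, map_zero]
      rintro ⟨-, h⟩
      have := Finset.card_erase_add_one hi
      omega

lemma Lev_all (k : ℕ) (hk : k + 1 < Fintype.card ι)
    (h0 : ∀ S : Finset ι, S.card = k + 1 → ∃ v, {v} ∈ K ∧ c v ∉ S)
    (f1 : ∀ S : Finset ι, 1 ≤ S.card → S.card ≤ k → ∀ z ∈ Ch F (KS K c S) (k + 1 - S.card),
      bd z = 0 → ∃ y ∈ Ch F (KS K c S) (k + 2 - S.card), bd y = z) :
    ∀ j, j ≤ k → ∃ Y : Finset ι → Finset ι → Cc F U, Lev K c (k + 2) (k + 1 - j) Y := by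
  intro j
  induction j with
  | zero => intro _; exact Lev_base k h0
  | succ j ih =>
    intro hj
    obtain ⟨Y, hY⟩ := ih (by omega)
    rw [show k + 1 - j = (k + 1 - (j + 1)) + 1 by omega] at hY
    refine Lev_step (by omega) hY (by omega) ?_
    intro S hS z hz hb
    obtain ⟨y, hy, e⟩ := f1 S (by omega) (by omega) z (by
      rwa [show k + 1 - S.card = k + 2 - (k + 1 - (j + 1)) - 1 by omega]) hb
    exact ⟨y, by rwa [← hS], e⟩

lemma core (k : ℕ) (hk : k + 1 < Fintype.card ι)
    (h0 : ∀ S : Finset ι, S.card = k + 1 → ∃ v, {v} ∈ K ∧ c v ∉ S)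
    (f1 : ∀ S : Finset ι, 1 ≤ S.card → S.card ≤ k → ∀ z ∈ Ch F (KS K c S) (k + 1 - S.card),
      bd z = 0 → ∃ y ∈ Ch F (KS K c S) (k + 2 - S.card), bd y = z)
    (f2 : ∀ S : Finset ι, k + 2 ≤ S.card → ∀ z ∈ Ch F (Kt K c S) (S.card - 1),
      bd z = 0 → ∃ y ∈ Ch F (Kt K c S) S.card, bd y = z) : False := by
  obtain ⟨Y, hY⟩ := Lev_all k hk h0 f1 k le_rfl
  rw [show k + 1 - k = 1 by omega] at hY
  have hne : Nonempty ι := Fintype.card_pos_iff.1 (by omega)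
  obtain ⟨b⟩ := hne
  have main : ∀ n, k + 2 ≤ n → ∃ g : Finset ι → Cc F U, (∀ X, X.card ≠ n → g X = 0) ∧
      (∀ X, g X ∈ Ch F (Kt K c X) (X.card - 1)) ∧ (∀ X, bd (g X) = 0) ∧ (∀ X, dl g X = 0) ∧
      ∑ R, ep c R (hh b g R) ≠ 0 := by
    intro n hn
    induction n, hn using Nat.le_induction with
    | base =>
      refine ⟨GG Y ∅, ?_, ?_, ?_, ?_, ?_⟩
      · intro X hX
        exact GG_zero hY (by simp) (by simp) (by simpa using hX)
      · intro X
        refine Submodule.sum_mem _ fun t ht => zsmul_mem ?_ _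
        have := hY.fa (insert t ∅) (by simp) (X.erase t)
        rw [Finset.card_erase_of_mem ht] at this
        refine Ch_mono ?_ this
        intro s hs
        refine ⟨hs.1, t, ht, fun v hv => ?_⟩
        simpa using hs.2 v hv
      · intro X
        exact hY.fe ∅ (by simp) X (by simp)
      · intro X
        exact GG_dl hY (by simp) (by simp)
      · have := GT_tr hY (S := ∅) (b := b) (by simp) (by simp)
        have e : GT Y ∅ = GG Y ∅ := by funext T; simp [GT]
        rw [e] at this
        rw [this]; exact one_ne_zero
    | succ n hn ih =>
      obtain ⟨g, g1, g2, g3, g4, g5⟩ := ih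
      have hW : ∀ X : Finset ι, ∃ w : Cc F U, w ∈ Ch F (Kt K c X) X.card ∧ bd w = g X ∧
          (X.card ≠ n → w = 0) := by
        intro X
        by_cases hX : X.card = n
        · obtain ⟨w, hw, e⟩ := f2 X (by omega) (g X) (g2 X) (g3 X)
          exact ⟨w, hw, e, fun h => absurd hX h⟩
        · exact ⟨0, zero_mem _, by rw [map_zero, g1 X hX], fun _ => rfl⟩
      choose w hw1 hw2 hw3 using hW
      have hbw : (fun T => bd (w T)) = g := funext hw2
      refine ⟨dl w, ?_, ?_, ?_, ?_, ?_⟩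
      · intro X hX
        refine Finset.sum_eq_zero fun i hi => ?_
        rw [hw3, smul_zero]
        have := Finset.card_erase_add_one hi
        omega
      · intro X
        refine Submodule.sum_mem _ fun t ht => zsmul_mem ?_ _
        have := hw1 (X.erase t)
        rw [Finset.card_erase_of_mem ht] at this
        refine Ch_mono ?_ this
        rintro s ⟨h1, j, hj, h2⟩
        exact ⟨h1, j, Finset.mem_of_mem_erase hj, h2⟩
      · intro X
        rw [bd_dl, hbw, g4]
      · exact dl_dl w
      · have h1 : ∑ T, ep c T (w T) = 0 := by
          refine Finset.sum_eq_zero fun T _ => ?_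
          by_cases hT : T.card = n
          · exact ep_Kt (hw1 T) (Finset.card_pos.1 (by omega))
          · rw [hw3 T hT, map_zero]
        have h2 : ∑ T, ep c T (w T) = ∑ T, ep c T (hh b g T) + ∑ T, ep c T (hh b (dl w) T) := by
          have h3 : ∑ T, ep c T (hh b g T) = ∑ T, ep c T (dl (hh b w) T) := by
            rw [ep_adj]
            refine Finset.sum_congr rfl fun T _ => ?_
            rw [bd_hh, hbw]
          rw [h3, ← Finset.sum_add_distrib]
          refine Finset.sum_congr rfl fun T _ => ?_
          rw [← map_add, dl_hh]
        intro h3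
        rw [h1, h3, add_zero] at h2
        exact g5 h2.symm
  obtain ⟨g, g1, -, -, -, g5⟩ := main (Fintype.card ι + 1) (by omega)
  refine g5 (Finset.sum_eq_zero fun R _ => ?_)
  rw [hh_zero_of, map_zero]
  refine g1 _ ?_
  have := Finset.card_le_univ (insert b R)
  omega

end HelperFour

/-- Mixed homological Sperner theorem: conditions on the complexes `K_{complement S}`
for small `S` and on the complexes `K̃_S` for large `S` force a rainbow simplex. -/
theorem mixed_homological_sperner {V : Type*} [LinearOrder V] (F : Type*) [Field F]
    (m : ℕ) (K : Set (Finset V)) (hK : IsComplex K) (hvert : ∀ v : V, {v} ∈ K)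
    (c : V → Fin (m + 1)) (hc : Function.Surjective c)
    (hH : RedHVanish F F V K ((m : ℤ) - 1))
    (k : ℤ) (hk1 : -1 ≤ k) (hk2 : k ≤ (m : ℤ) - 1)
    (h1 : ∀ S : Finset (Fin (m + 1)), 1 ≤ S.card → (S.card : ℤ) ≤ k + 1 →
      RedHVanish F F V {s ∈ K | ∀ v ∈ s, c v ∉ S} (k - S.card))
    (h2 : ∀ S : Finset (Fin (m + 1)), k + 2 ≤ (S.card : ℤ) → S.card ≤ m →
      RedHVanish F F V {s ∈ K | ¬ S ⊆ s.image c} ((S.card : ℤ) - 2)) :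
    ∃ s ∈ K, ∀ i : Fin (m + 1), ∃! v, v ∈ s ∧ c v = i := by
  by_contra hno
  -- no rainbow simplex: every simplex misses a colour
  have hmiss : ∀ s ∈ K, ∃ j, ∀ v ∈ s, c v ≠ j := by
    intro s hs
    by_contra hcon
    push Not at hcon
    choose p hp1 hp2 using hcon
    refine hno ⟨Finset.univ.image p, ?_, ?_⟩
    · refine hK.2 s hs _ ?_ ?_
      · intro x hx
        obtain ⟨i, -, rfl⟩ := Finset.mem_image.1 hx
        exact hp1 i
      · exact ⟨p 0, Finset.mem_image_of_mem _ (Finset.mem_univ _)⟩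
    · intro i
      refine ⟨p i, ⟨Finset.mem_image_of_mem _ (Finset.mem_univ _), hp2 i⟩, ?_⟩
      rintro y ⟨hy1, hy2⟩
      obtain ⟨j, -, rfl⟩ := Finset.mem_image.1 hy1
      rw [hp2 j] at hy2
      rw [hy2]
  -- the case of dimension zero
  have hm : 1 ≤ m := by
    by_contra hm
    obtain ⟨v, hv⟩ := hc 0
    obtain ⟨j, hj⟩ := hmiss _ (hvert v)
    have h3 := hj v (by simp)
    apply h3
    ext
    have := (c v).2
    have := j.2
    omega
  have hKS : ∀ S, IsComplex (KS K c S) := by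
    intro S
    refine ⟨fun s hs => hK.1 s hs.1, fun s hs t ht hn => ⟨hK.2 s hs.1 t ht hn, ?_⟩⟩
    exact fun v hv => hs.2 v (ht hv)
  have hKt : ∀ S, IsComplex (Kt K c S) := by
    intro S
    refine ⟨fun s hs => hK.1 s hs.1, fun s hs t ht hn => ⟨hK.2 s hs.1 t ht hn, ?_⟩⟩
    obtain ⟨j, hj, h⟩ := hs.2
    exact ⟨j, hj, fun v hv => h v (ht hv)⟩
  have eKt : ∀ S : Finset (Fin (m + 1)), {s ∈ K | ¬ S ⊆ s.image c} = Kt K c S := by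
    intro S
    ext s
    simp only [Kt, Set.mem_setOf_eq, Finset.not_subset, Finset.mem_image, not_exists, not_and]
  have h2' : ∀ S : Finset (Fin (m + 1)), k + 2 ≤ (S.card : ℤ) →
      RedHVanish F F V (Kt K c S) ((S.card : ℤ) - 2) := by
    intro S hS
    by_cases hSm : S.card ≤ m
    · rw [← eKt]; exact h2 S hS hSm
    · have hcard : S.card = m + 1 := by
        have := Finset.card_le_univ S
        rw [Fintype.card_fin] at this
        omega
      have hu : S = Finset.univ := by
        rw [← Finset.card_eq_iff_eq_univ, Fintype.card_fin, hcard]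
      have : Kt K c S = K := by
        ext s
        constructor
        · exact fun h => h.1
        · intro h
          obtain ⟨j, hj⟩ := hmiss s h
          exact ⟨h, j, by simp [hu], hj⟩
      rw [this, hcard]
      convert hH using 1
      push_cast; ring
  -- reduce to `k ≥ 0`
  obtain ⟨l, hl1, hl2, hl3, hl4⟩ : ∃ l : ℕ, l + 1 ≤ m ∧
      (∀ S : Finset (Fin (m + 1)), 1 ≤ S.card → S.card ≤ l + 1 →
        RedHVanish F F V (KS K c S) ((l : ℤ) - S.card)) ∧
      (∀ S : Finset (Fin (m + 1)), l + 2 ≤ S.card →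
        RedHVanish F F V (Kt K c S) ((S.card : ℤ) - 2)) ∧ True := by
    by_cases hk : k = -1
    · refine ⟨0, by omega, ?_, ?_, trivial⟩
      · intro S hS1 hS2
        have hS : S.card = 1 := by omega
        obtain ⟨j, rfl⟩ := Finset.card_eq_one.1 hS
        have h := h2' {j} (by rw [hS]; omega)
        have e : Kt K c {j} = KS K c {j} := by
          ext s; simp [Kt, KS]
        rw [e] at h
        simpa using h
      · intro S hS
        exact h2' S (by omega)
    · refine ⟨k.toNat, by omega, ?_, ?_, trivial⟩
      · intro S hS1 hS2
        rw [Int.toNat_of_nonneg (by omega)]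
        exact h1 S hS1 (by omega)
      · intro S hS
        exact h2' S (by omega)
  refine core (F := F) (K := K) (c := c) l (by rw [Fintype.card_fin]; omega) ?_ ?_ ?_
  · intro S hS
    have h := hl2 S (by omega) (by omega)
    unfold RedHVanish at h
    rw [if_neg (by omega), if_pos (by omega)] at h
    obtain ⟨s, hs⟩ := h
    obtain ⟨v, hv⟩ := hK.1 s hs.1
    exact ⟨v, hvert v, hs.2 v hv⟩
  · intro S hS1 hS2 z hz hb
    have h := hl2 S hS1 (by omega)
    rw [show (l : ℤ) - S.card = ((l + 1 - S.card : ℕ) : ℤ) - 1 by omega] at h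
    obtain ⟨y, hy, e⟩ := fill (hKS S) h hz hb
    exact ⟨y, by rwa [show l + 2 - S.card = l + 1 - S.card + 1 by omega], e⟩
  · intro S hS z hz hb
    have h := hl3 S hS
    rw [show (S.card : ℤ) - 2 = ((S.card - 1 : ℕ) : ℤ) - 1 by omega] at h
    obtain ⟨y, hy, e⟩ := fill (hKt S) h hz hb
    exact ⟨y, by rwa [show S.card = S.card - 1 + 1 by omega], e⟩
end
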